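/- Let L/K be a finite Galois extension of complete discrete valued fields of equal characteristic p > 0 with Galois group G, such that the induced extension of residue fields is separable. Then the pro-abelian group {H^1(G, W_n(O_L))}_{n∈ℕ} is zero; that is, for every n ∈ ℕ there exists an integer m > n such that the map H^1(G, W_m(O_L)) → H^1(G, W_n(O_L)) induced by the truncation map W_m(O_L) → W_n(O_L) is the zero map. -/

import Mathlib

/-!
Common background: complete discretely valued fields, their valuation rings,
residue fields, Galois action on the valuation ring, truncated Witt vector
functoriality, and ramification breaks.
-/

noncomputable section

open scoped Classical

/-- A field equipped with a normalized (i.e. surjective onto `ℤ`) discrete additive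
valuation `v : K → WithTop ℤ` with respect to which it is complete. -/
structure CompleteDiscreteValuation (K : Type*) [Field K] where
  v : K → WithTop ℤ
  eq_top_iff : ∀ x : K, v x = ⊤ ↔ x = 0
  map_one : v 1 = 0
  map_mul : ∀ x y : K, v (x * y) = v x + v y
  min_le_add : ∀ x y : K, min (v x) (v y) ≤ v (x + y)
  surjective : ∀ n : ℤ, ∃ x : K, v x = (n : WithTop ℤ)
  complete : ∀ x : ℕ → K,
      (∀ n : ℕ, ((n : ℤ) : WithTop ℤ) ≤ v (x (n + 1) - x n)) →
      ∃ y : K, ∀ n : ℕ, ((n : ℤ) : WithTop ℤ) ≤ v (y - x n)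

namespace TruncatedWittVector

variable {p n : ℕ} [hp : Fact p.Prime] {R S : Type*} [CommRing R] [CommRing S]

lemma truncateFun_congr_map (f : R →+* S) (a b : WittVector p R)
    (h : WittVector.truncateFun n a = WittVector.truncateFun n b) :
    WittVector.truncateFun n (WittVector.map f a) =
      WittVector.truncateFun n (WittVector.map f b) := by
  ext i
  have hc := congrArg (fun z => TruncatedWittVector.coeff i z) h
  simp only [WittVector.coeff_truncateFun] at hc ⊢
  rw [WittVector.map_coeff, WittVector.map_coeff, hc]

/-- Functoriality of truncated Witt vectors: the ring homomorphism
`W_n(R) → W_n(S)` induced by `f : R → S`, acting componentwise. -/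
def map (f : R →+* S) : TruncatedWittVector p n R →+* TruncatedWittVector p n S where
  toFun x := WittVector.truncateFun n (WittVector.map f x.out)
  map_one' := by
    show WittVector.truncateFun n (WittVector.map f (1 : TruncatedWittVector p n R).out) = 1
    have h : WittVector.truncateFun n ((1 : TruncatedWittVector p n R)).out =
        WittVector.truncateFun n (1 : WittVector p R) := by
      rw [truncateFun_out, WittVector.truncateFun_one]
    have := truncateFun_congr_map f _ _ h
    rw [this, map_one, WittVector.truncateFun_one]
  map_mul' x y := by
    show WittVector.truncateFun n (WittVector.map f (x * y).out) =
      WittVector.truncateFun n (WittVector.map f x.out) *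
        WittVector.truncateFun n (WittVector.map f y.out)
    have h : WittVector.truncateFun n (x * y).out =
        WittVector.truncateFun n (x.out * y.out) := by
      rw [truncateFun_out, WittVector.truncateFun_mul, truncateFun_out, truncateFun_out]
    have := truncateFun_congr_map f _ _ h
    rw [this, map_mul, WittVector.truncateFun_mul]
  map_zero' := by
    show WittVector.truncateFun n (WittVector.map f (0 : TruncatedWittVector p n R).out) = 0
    have h : WittVector.truncateFun n ((0 : TruncatedWittVector p n R)).out =
        WittVector.truncateFun n (0 : WittVector p R) := by
      rw [truncateFun_out, WittVector.truncateFun_zero]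
    have := truncateFun_congr_map f _ _ h
    rw [this, map_zero, WittVector.truncateFun_zero]
  map_add' x y := by
    show WittVector.truncateFun n (WittVector.map f (x + y).out) =
      WittVector.truncateFun n (WittVector.map f x.out) +
        WittVector.truncateFun n (WittVector.map f y.out)
    have h : WittVector.truncateFun n (x + y).out =
        WittVector.truncateFun n (x.out + y.out) := by
      rw [truncateFun_out, WittVector.truncateFun_add, truncateFun_out, truncateFun_out]
    have := truncateFun_congr_map f _ _ h
    rw [this, map_add, WittVector.truncateFun_add]

@[simp]
lemma map_coeff (f : R →+* S) (x : TruncatedWittVector p n R) (i : Fin n) :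
    (map f x).coeff i = f (x.coeff i) := by
  show (WittVector.truncateFun n (WittVector.map f x.out)).coeff i = f (x.coeff i)
  rw [WittVector.coeff_truncateFun, WittVector.map_coeff, coeff_out]

end TruncatedWittVector

namespace CompleteDiscreteValuation

variable {K : Type*} [Field K]

lemma v_zero (w : CompleteDiscreteValuation K) : w.v 0 = ⊤ := (w.eq_top_iff 0).2 rfl

lemma v_neg_one (w : CompleteDiscreteValuation K) : w.v (-1) = 0 := by
  have h := w.map_mul (-1) (-1)
  rw [neg_mul_neg, one_mul, w.map_one] at h
  cases h' : w.v (-1) with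
  | top =>
      exact absurd ((w.eq_top_iff (-1)).1 h') (by norm_num)
  | coe a =>
      rw [h'] at h
      have ha : a + a = 0 := by exact_mod_cast h.symm
      have : a = 0 := by omega
      rw [this]
      rfl

lemma v_neg (w : CompleteDiscreteValuation K) (x : K) : w.v (-x) = w.v x := by
  rw [show -x = -1 * x by ring, w.map_mul, w.v_neg_one, zero_add]

/-- The valuation ring (ring of integers) of a complete discretely valued field. -/
def integers (w : CompleteDiscreteValuation K) : Subring K where
  carrier := {x : K | 0 ≤ w.v x}
  zero_mem' := by simp [Set.mem_setOf_eq, v_zero]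
  one_mem' := by simp [Set.mem_setOf_eq, w.map_one]
  add_mem' {a b} ha hb := le_trans (le_min ha hb) (w.min_le_add a b)
  mul_mem' {a b} ha hb := by
    simp only [Set.mem_setOf_eq] at *
    rw [w.map_mul]
    exact add_nonneg ha hb
  neg_mem' {a} ha := by
    simp only [Set.mem_setOf_eq] at *
    rwa [w.v_neg]

lemma mem_integers_iff (w : CompleteDiscreteValuation K) (x : K) :
    x ∈ w.integers ↔ 0 ≤ w.v x := Iff.rfl

/-- The maximal ideal of the valuation ring. -/
def maxIdeal (w : CompleteDiscreteValuation K) : Ideal w.integers where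
  carrier := {x | 0 < w.v (x : K)}
  zero_mem' := by simp [Set.mem_setOf_eq, v_zero]
  add_mem' {a b} ha hb := lt_of_lt_of_le (lt_min ha hb) (w.min_le_add (a : K) (b : K))
  smul_mem' c x hx := by
    simp only [Set.mem_setOf_eq] at *
    show 0 < w.v ((c : K) * (x : K))
    rw [w.map_mul]
    exact lt_of_lt_of_le hx (le_add_of_nonneg_left c.2)

/-- The residue field of a complete discretely valued field. -/
abbrev residueField (w : CompleteDiscreteValuation K) := w.integers ⧸ w.maxIdeal

section Extension

variable {L : Type*} [Field L] [Algebra K L]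

/-- The ring homomorphism between valuation rings induced by the inclusion `K ⟶ L`,
when the valuation of `L` restricts to `e` times the valuation of `K`. -/
def integerMap (wK : CompleteDiscreteValuation K) (wL : CompleteDiscreteValuation L)
    (e : ℕ) (hcomp : ∀ x : K, wL.v (algebraMap K L x) = e • wK.v x) :
    wK.integers →+* wL.integers where
  toFun x := ⟨algebraMap K L x, by
    rw [mem_integers_iff, hcomp]
    exact nsmul_nonneg x.2 e⟩
  map_one' := Subtype.ext (by simp)
  map_mul' x y := Subtype.ext (by simp)
  map_zero' := Subtype.ext (by simp)
  map_add' x y := Subtype.ext (by simp)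

/-- The induced homomorphism between the residue fields. -/
def residueMap (wK : CompleteDiscreteValuation K) (wL : CompleteDiscreteValuation L)
    (e : ℕ) (he : 0 < e) (hcomp : ∀ x : K, wL.v (algebraMap K L x) = e • wK.v x) :
    wK.residueField →+* wL.residueField :=
  Ideal.Quotient.lift wK.maxIdeal
    ((Ideal.Quotient.mk wL.maxIdeal).comp (integerMap wK wL e hcomp))
    (by
      intro a ha
      rw [RingHom.comp_apply, Ideal.Quotient.eq_zero_iff_mem]
      show 0 < wL.v (algebraMap K L (a : K))
      rw [hcomp]
      calc (0 : WithTop ℤ) < wK.v (a : K) := ha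
        _ = 1 • wK.v (a : K) := (one_nsmul _).symm
        _ ≤ e • wK.v (a : K) := nsmul_le_nsmul_left (le_of_lt ha) he)

/-- The induced extension of residue fields `k_L / k_K` is separable. -/
def ResidueSeparable (wK : CompleteDiscreteValuation K) (wL : CompleteDiscreteValuation L)
    (e : ℕ) (he : 0 < e) (hcomp : ∀ x : K, wL.v (algebraMap K L x) = e • wK.v x) : Prop :=
  letI : Algebra wK.residueField wL.residueField := (residueMap wK wL e he hcomp).toAlgebra
  Algebra.IsSeparable wK.residueField wL.residueField

/-- A `K`-algebra automorphism of `L` (necessarily preserving the valuation, which is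
recorded in the hypothesis `hGal`) restricts to a ring homomorphism of the valuation
ring `O_L`.  This is the Galois action on `O_L`. -/
def galRes (wL : CompleteDiscreteValuation L)
    (hGal : ∀ (σ : L ≃ₐ[K] L) (x : L), wL.v (σ x) = wL.v x) (σ : L ≃ₐ[K] L) :
    wL.integers →+* wL.integers where
  toFun x := ⟨σ x, by rw [mem_integers_iff, hGal]; exact x.2⟩
  map_one' := Subtype.ext (by simp)
  map_mul' x y := Subtype.ext (by simp)
  map_zero' := Subtype.ext (by simp)
  map_add' x y := Subtype.ext (by simp)

/-- The statement that the action of the Galois group of `L/K` on `O_L/m_L^{s+1}`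
is faithful: every nontrivial automorphism moves some integer of `L` by an element
of valuation at most `s`. -/
def FaithfulOnQuotient (K : Type*) [Field K] {L : Type*} [Field L] [Algebra K L]
    (wL : CompleteDiscreteValuation L) (s : ℕ) : Prop :=
  ∀ σ : L ≃ₐ[K] L, σ ≠ 1 → ∃ x : L, 0 ≤ wL.v x ∧ wL.v (σ x - x) ≤ ((s : ℤ) : WithTop ℤ)

/-- `s` is the ramification break (lower ramification jump) of `L/K`: the smallest
nonnegative integer such that the induced action of `Gal(L/K)` on `O_L/m_L^{s+1}`
is faithful. -/
def IsRamificationBreak (K : Type*) [Field K] {L : Type*} [Field L] [Algebra K L]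
    (wL : CompleteDiscreteValuation L) (s : ℕ) : Prop :=
  FaithfulOnQuotient K wL s ∧ ∀ t : ℕ, t < s → ¬ FaithfulOnQuotient K wL t

end Extension

end CompleteDiscreteValuation

open CompleteDiscreteValuation

namespace HPV

section WittBasic

variable {p : ℕ} [hp : Fact p.Prime]

lemma teich_add_V {R : Type*} [CommRing R] (x : WittVector p R) :
    WittVector.teichmuller p (x.coeff 0) + WittVector.verschiebung (x.shift 1) = x := by
  ext k
  rw [WittVector.coeff_add_of_disjoint]
  · cases k with
    | zero => simp
    | succ k =>
      rw [WittVector.teichmuller_coeff_pos _ _ _ (Nat.succ_pos k),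
        WittVector.verschiebung_coeff_succ, WittVector.shift_coeff, zero_add, add_comm]
  · intro n
    cases n with
    | zero => right; simp
    | succ k => left; exact WittVector.teichmuller_coeff_pos _ _ _ (Nat.succ_pos k)

lemma teich_V_coeff_zero {R : Type*} [CommRing R] (a : R) (y : WittVector p R) :
    (WittVector.teichmuller p a + WittVector.verschiebung y).coeff 0 = a := by
  rw [WittVector.coeff_add_of_disjoint]
  · simp
  · intro n
    cases n with
    | zero => right; simp
    | succ k => left; exact WittVector.teichmuller_coeff_pos _ _ _ (Nat.succ_pos k)

lemma teich_V_coeff_succ {R : Type*} [CommRing R] (a : R) (y : WittVector p R) (k : ℕ) :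
    (WittVector.teichmuller p a + WittVector.verschiebung y).coeff (k + 1) = y.coeff k := by
  rw [WittVector.coeff_add_of_disjoint]
  · rw [WittVector.teichmuller_coeff_pos _ _ _ (Nat.succ_pos k),
        WittVector.verschiebung_coeff_succ, zero_add]
  · intro n
    cases n with
    | zero => right; simp
    | succ k => left; exact WittVector.teichmuller_coeff_pos _ _ _ (Nat.succ_pos k)

lemma sum_decomp {R : Type*} [CommRing R] (x y : WittVector p R) :
    x + y = WittVector.teichmuller p (x.coeff 0 + y.coeff 0)
      + WittVector.verschiebung (x.shift 1 + y.shift 1 +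
        (WittVector.teichmuller p (x.coeff 0) + WittVector.teichmuller p (y.coeff 0)).shift 1) := by
  have hx := teich_add_V x
  have hy := teich_add_V y
  have e2 := teich_add_V
    (WittVector.teichmuller p (x.coeff 0) + WittVector.teichmuller p (y.coeff 0))
  rw [WittVector.add_coeff_zero, WittVector.teichmuller_coeff_zero,
    WittVector.teichmuller_coeff_zero] at e2
  generalize WittVector.teichmuller p (x.coeff 0 + y.coeff 0) = T at *
  generalize (WittVector.teichmuller p (x.coeff 0) +
    WittVector.teichmuller p (y.coeff 0)).shift 1 = W at *
  rw [map_add WittVector.verschiebung, map_add WittVector.verschiebung]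
  linear_combination -e2 - hx - hy

lemma teich_mul_coeff {R : Type*} [CommRing R] [CharP R p] (k : ℕ) :
    ∀ (a : R) (x : WittVector p R),
      (WittVector.teichmuller p a * x).coeff k = a ^ (p ^ k) * x.coeff k := by
  induction k with
  | zero =>
    intro a x
    rw [WittVector.mul_coeff_zero]; simp
  | succ k ih =>
    intro a x
    conv_lhs => rw [← teich_add_V x]
    have h1 : WittVector.teichmuller p a * WittVector.verschiebung (x.shift 1)
        = WittVector.verschiebung (WittVector.teichmuller p (a ^ p) * x.shift 1) := by
      have h2 : WittVector.teichmuller p (a ^ p)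
          = WittVector.frobenius (WittVector.teichmuller p a) := by
        rw [WittVector.frobenius_eq_map_frobenius, WittVector.map_teichmuller]; rfl
      rw [h2, mul_comm, ← WittVector.verschiebung_mul_frobenius, mul_comm (x.shift 1)]
    rw [mul_add, ← _root_.map_mul, h1, teich_V_coeff_succ, ih, WittVector.shift_coeff, pow_succ' p k,
      pow_mul, add_comm 1 k]

lemma intW_iff {R : Type*} [CommRing R] (O : Subring R) (m : ℕ) (x : WittVector p R) :
    (∀ k < m, x.coeff k ∈ O) ↔ ∃ y : WittVector p O,
      WittVector.truncate m (WittVector.map O.subtype y) = WittVector.truncate m x := by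
  constructor
  · intro h
    refine ⟨WittVector.mk p (fun k => if hk : k < m then ⟨x.coeff k, h k hk⟩ else 0), ?_⟩
    ext i
    rw [WittVector.coeff_truncate, WittVector.coeff_truncate, WittVector.map_coeff]
    simp [WittVector.coeff_mk]
  · rintro ⟨y, hy⟩ k hk
    have := congrArg (TruncatedWittVector.coeff ⟨k, hk⟩) hy
    rw [WittVector.coeff_truncate, WittVector.coeff_truncate, WittVector.map_coeff] at this
    simp only at this
    rw [← this]
    exact (y.coeff k).2

/-- Witt vectors with the first `m` coordinates in a subring. -/
def IntW (p : ℕ) [hp : Fact p.Prime] {R : Type*} [CommRing R] (O : Subring R) (m : ℕ) :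
    Subring (WittVector p R) where
  carrier := {x | ∀ k < m, x.coeff k ∈ O}
  zero_mem' := by intro k _; simp
  one_mem' := (intW_iff O m 1).2 ⟨1, by simp⟩
  add_mem' := by
    intro a b ha hb
    obtain ⟨y, hy⟩ := (intW_iff O m a).1 ha
    obtain ⟨z, hz⟩ := (intW_iff O m b).1 hb
    exact (intW_iff O m _).2 ⟨y + z, by rw [map_add, map_add, hy, hz, map_add]⟩
  mul_mem' := by
    intro a b ha hb
    obtain ⟨y, hy⟩ := (intW_iff O m a).1 ha
    obtain ⟨z, hz⟩ := (intW_iff O m b).1 hb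
    exact (intW_iff O m _).2 ⟨y * z, by rw [_root_.map_mul, _root_.map_mul, hy, hz, _root_.map_mul]⟩
  neg_mem' := by
    intro a ha
    obtain ⟨y, hy⟩ := (intW_iff O m a).1 ha
    exact (intW_iff O m _).2 ⟨-y, by rw [map_neg, map_neg, hy, map_neg]⟩

lemma mem_IntW {R : Type*} [CommRing R] (O : Subring R) (m : ℕ) (x : WittVector p R) :
    x ∈ IntW p O m ↔ ∀ k < m, x.coeff k ∈ O := Iff.rfl

lemma IntW_mono {R : Type*} [CommRing R] (O : Subring R) {m n : ℕ} (h : n ≤ m)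
    {x : WittVector p R} (hx : x ∈ IntW p O m) : x ∈ IntW p O n :=
  fun k hk => hx k (lt_of_lt_of_le hk h)

lemma teich_mem_IntW {R : Type*} [CommRing R] (O : Subring R) {a : R} (ha : a ∈ O) (m : ℕ) :
    WittVector.teichmuller p a ∈ IntW p O m := by
  intro k _
  cases k with
  | zero => simpa using ha
  | succ k =>
    rw [WittVector.teichmuller_coeff_pos _ _ _ (Nat.succ_pos k)]; exact O.zero_mem

lemma iterV_mem_IntW {R : Type*} [CommRing R] (O : Subring R) (x : WittVector p R) {i m : ℕ}
    (h : m ≤ i) : (WittVector.verschiebung^[i] x) ∈ IntW p O m := by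
  intro k hk
  rw [WittVector.iterate_verschiebung_coeff_eq_zero _ (lt_of_lt_of_le hk h)]
  exact O.zero_mem

lemma map_mem_IntW {R : Type*} [CommRing R] (O : Subring R) (f : R →+* R)
    (hf : ∀ x ∈ O, f x ∈ O) {m : ℕ} {x : WittVector p R} (hx : x ∈ IntW p O m) :
    WittVector.map f x ∈ IntW p O m := by
  intro k hk
  rw [WittVector.map_coeff]
  exact hf _ (hx k hk)

end WittBasic

section WittVal

variable {p : ℕ} [hp : Fact p.Prime] {L : Type*} [Field L]

/-- The valuation subring of an additive valuation. -/
def vInt (v : AddValuation L (WithTop ℤ)) : Subring L where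
  carrier := {x | 0 ≤ v x}
  zero_mem' := by simp
  one_mem' := by simp
  add_mem' ha hb := v.map_le_add ha hb
  mul_mem' {a b} ha hb := by
    simp only [Set.mem_ofPred_eq] at *
    rw [v.map_mul]; exact add_nonneg ha hb
  neg_mem' {a} ha := by
    simp only [Set.mem_ofPred_eq] at *
    rwa [v.map_neg]

lemma mem_vInt (v : AddValuation L (WithTop ℤ)) (x : L) : x ∈ vInt v ↔ 0 ≤ v x := Iff.rfl

lemma val_pow_ge (v : AddValuation L (WithTop ℤ)) {a : L} {r : ℤ} (h : (r : WithTop ℤ) ≤ v a)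
    (n : ℕ) : (((n : ℤ) * r : ℤ) : WithTop ℤ) ≤ v (a ^ n) := by
  rw [v.map_pow]
  have : (((n : ℤ) * r : ℤ) : WithTop ℤ) = n • (r : WithTop ℤ) := by
    rw [← WithTop.coe_nsmul]; simp
  rw [this]
  exact nsmul_le_nsmul_right h n

lemma val_pow_eq (v : AddValuation L (WithTop ℤ)) {a : L} {r : ℤ} (h : v a = (r : WithTop ℤ))
    (n : ℕ) : v (a ^ n) = (((n : ℤ) * r : ℤ) : WithTop ℤ) := by
  rw [v.map_pow, h, ← WithTop.coe_nsmul]; simp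

lemma val_mul_ge (v : AddValuation L (WithTop ℤ)) {a b : L} {r s : ℤ}
    (h : (r : WithTop ℤ) ≤ v a) (h' : (s : WithTop ℤ) ≤ v b) :
    ((r + s : ℤ) : WithTop ℤ) ≤ v (a * b) := by
  rw [v.map_mul, WithTop.coe_add]; exact add_le_add h h'

lemma val_mul_eq (v : AddValuation L (WithTop ℤ)) {a b : L} {r s : ℤ}
    (h : v a = (r : WithTop ℤ)) (h' : v b = (s : WithTop ℤ)) :
    v (a * b) = ((r + s : ℤ) : WithTop ℤ) := by
  rw [v.map_mul, WithTop.coe_add, h, h']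

lemma val_div_nonneg (v : AddValuation L (WithTop ℤ)) {a b : L} (ha : a ≠ 0) (h : v a ≤ v b) :
    0 ≤ v (b / a) := by
  by_contra hlt
  push Not at hlt
  have h1 : v b = v (b / a) + v a := by rw [← v.map_mul, div_mul_cancel₀ _ ha]
  have ha' : v a ≠ ⊤ := v.ne_top_iff.2 ha
  have : v b < v a := by
    rw [h1]
    calc v (b / a) + v a < 0 + v a := (WithTop.add_lt_add_iff_right ha').2 hlt
      _ = v a := zero_add _
  exact absurd h (not_le.2 this)

variable [CharP L p]

lemma teich_add_val (v : AddValuation L (WithTop ℤ)) {a b : L} {r : ℤ}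
    (ha : (r : WithTop ℤ) ≤ v a) (hb : (r : WithTop ℤ) ≤ v b) (k : ℕ) :
    (((p ^ k : ℕ) * r : ℤ) : WithTop ℤ) ≤
      v ((WittVector.teichmuller p a + WittVector.teichmuller p b).coeff k) := by
  wlog hab : v a ≤ v b generalizing a b with H
  · rw [add_comm]; exact H hb ha (le_of_not_ge hab)
  by_cases h0 : a = 0
  · have : b = 0 := by
      rw [h0, v.map_zero, top_le_iff, v.top_iff] at hab; exact hab
    rw [h0, this]; simp
  have hb' : b = a * (b / a) := by field_simp
  have hc := val_div_nonneg v h0 hab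
  rw [hb', _root_.map_mul]
  have : WittVector.teichmuller p a + WittVector.teichmuller p a * WittVector.teichmuller p (b / a)
    = WittVector.teichmuller p a * (1 + WittVector.teichmuller p (b / a)) := by ring
  rw [this, teich_mul_coeff]
  have h1 : 1 + WittVector.teichmuller p (b / a) ∈ IntW p (vInt v) (k + 1) :=
    Subring.add_mem _ (Subring.one_mem _) (teich_mem_IntW _ hc _)
  have h2 : ((0 : ℤ) : WithTop ℤ) ≤ v ((1 + WittVector.teichmuller p (b / a)).coeff k) :=
    h1 k (Nat.lt_succ_self k)
  simpa using val_mul_ge v (val_pow_ge v ha (p ^ k)) h2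

/-- Approximate additivity of Witt coordinates. -/
lemma approx_add (v : AddValuation L (WithTop ℤ)) {s : ℤ} (hs : 0 < s) (m : ℕ) :
    ∀ (r : ℤ) (x y : WittVector p L),
      (∀ k < m, (((p ^ k : ℕ) * r + s : ℤ) : WithTop ℤ) ≤ v (x.coeff k)) →
      (∀ k < m, (((p ^ k : ℕ) * r + s : ℤ) : WithTop ℤ) ≤ v (y.coeff k)) →
      ∀ k < m, (((p ^ k : ℕ) * r + s + 1 : ℤ) : WithTop ℤ) ≤
        v ((x + y).coeff k - x.coeff k - y.coeff k) := by
  induction m with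
  | zero => intro r x y _ _ k hk; omega
  | succ m ih =>
    intro r x y hx hy k hk
    cases k with
    | zero => rw [WittVector.add_coeff_zero]; simp
    | succ k =>
      set a := x.coeff 0
      set b := y.coeff 0
      set w := (WittVector.teichmuller p a + WittVector.teichmuller p b).shift 1 with hw
      have hshift : ∀ x : WittVector p L,
          (∀ k < m + 1, (((p ^ k : ℕ) * r + s : ℤ) : WithTop ℤ) ≤ v (x.coeff k)) →
          ∀ k < m, (((p ^ k : ℕ) * (p * r) + s : ℤ) : WithTop ℤ) ≤ v ((x.shift 1).coeff k) := by
        intro x hx k hk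
        have := hx (k + 1) (by omega)
        rw [WittVector.shift_coeff, add_comm 1 k]
        convert this using 3
        push_cast; ring
      have hx' := hshift x hx
      have hy' := hshift y hy
      have hw' : ∀ k < m, (((p ^ k : ℕ) * (p * r) + s + 1 : ℤ) : WithTop ℤ) ≤ v (w.coeff k) := by
        intro k hk
        have h1 := hx 0 (by omega)
        have h2 := hy 0 (by omega)
        simp only [pow_zero, Nat.cast_one, one_mul] at h1 h2
        have h3 := teich_add_val (p := p) v h1 h2 (k + 1)
        rw [hw, WittVector.shift_coeff, add_comm 1 k]
        refine le_trans ?_ h3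
        have hp2 : (2 : ℤ) ≤ ((p ^ (k + 1) : ℕ) : ℤ) := by
          have : 2 ^ 1 ≤ p ^ (k + 1) :=
            (Nat.pow_le_pow_left hp.out.two_le 1).trans
              (Nat.pow_le_pow_right hp.out.pos (by omega))
          exact_mod_cast this
        have : ((p ^ k : ℕ) * (p * r) + s + 1 : ℤ) ≤ (p ^ (k + 1) : ℕ) * (r + s) := by
          have e : ((p ^ k : ℕ) * (p * r) : ℤ) = (p ^ (k + 1) : ℕ) * r := by push_cast; ring
          rw [e, mul_add]
          nlinarith
        exact_mod_cast this
      have hsum : x + y = WittVector.teichmuller p (a + b)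
          + WittVector.verschiebung (x.shift 1 + y.shift 1 + w) := sum_decomp x y
      have hk' : k < m := by omega
      have A1 := ih (p * r) (x.shift 1) (y.shift 1) hx' hy'
      have hxy : ∀ k < m, (((p ^ k : ℕ) * (p * r) + s : ℤ) : WithTop ℤ)
          ≤ v ((x.shift 1 + y.shift 1).coeff k) := by
        intro k hk
        have := A1 k hk
        have e : (x.shift 1 + y.shift 1).coeff k =
          ((x.shift 1 + y.shift 1).coeff k - (x.shift 1).coeff k - (y.shift 1).coeff k)
            + ((x.shift 1).coeff k + (y.shift 1).coeff k) := by ring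
        rw [e]
        refine v.map_le_add (le_trans ?_ this) (v.map_le_add (hx' k hk) (hy' k hk))
        exact_mod_cast (by omega)
      have A2 := ih (p * r) (x.shift 1 + y.shift 1) w hxy
        (fun k hk => le_trans (by exact_mod_cast (by omega)) (hw' k hk)) k hk'
      have A1 := A1 k hk'
      have A3 := hw' k hk'
      rw [hsum, teich_V_coeff_succ]
      have e : (x.shift 1 + y.shift 1 + w).coeff k - x.coeff (k + 1) - y.coeff (k + 1)
        = ((x.shift 1 + y.shift 1 + w).coeff k - (x.shift 1 + y.shift 1).coeff k - w.coeff k)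
          + (((x.shift 1 + y.shift 1).coeff k - (x.shift 1).coeff k - (y.shift 1).coeff k)
          + w.coeff k) := by
        rw [WittVector.shift_coeff x, WittVector.shift_coeff y, add_comm 1 k]; ring
      have e' : ((p ^ (k + 1) : ℕ) * r + s + 1 : ℤ) = (p ^ k : ℕ) * (p * r) + s + 1 := by
        push_cast; ring
      rw [e, e']
      exact v.map_le_add A2 (v.map_le_add A1 A3)

end WittVal
end HPV

namespace HPV
section TeichOne
variable {p : ℕ} [hp : Fact p.Prime]

lemma teich_one_add_dual :
    WittVector.teichmuller p (1 + DualNumber.eps : DualNumber ℚ) - 1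
      = WittVector.mk p (fun _ => (DualNumber.eps : DualNumber ℚ)) := by
  have : Invertible (p : DualNumber ℚ) := by
    refine ⟨algebraMap ℚ (DualNumber ℚ) ((p : ℚ)⁻¹), ?_, ?_⟩
    · rw [← map_natCast (algebraMap ℚ (DualNumber ℚ)), ← _root_.map_mul, inv_mul_cancel₀, _root_.map_one]
      exact_mod_cast hp.out.ne_zero
    · rw [← map_natCast (algebraMap ℚ (DualNumber ℚ)), ← _root_.map_mul, mul_inv_cancel₀, _root_.map_one]
      exact_mod_cast hp.out.ne_zero
  apply (WittVector.ghostMap.bijective_of_invertible p (DualNumber ℚ)).1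
  funext k
  rw [WittVector.ghostMap_apply, WittVector.ghostMap_apply, map_sub, _root_.map_one,
    WittVector.ghostComponent_teichmuller, WittVector.ghostComponent_apply,
    aeval_wittPolynomial]
  rw [Finset.sum_range_succ, Finset.sum_eq_zero]
  · have : ∀ n : ℕ, (1 + DualNumber.eps : DualNumber ℚ) ^ n = 1 + (n : DualNumber ℚ) * DualNumber.eps := by
      intro n
      induction n with
      | zero => simp
      | succ n ih =>
        rw [pow_succ, ih]
        have := DualNumber.eps_mul_eps (R := ℚ)
        push_cast
        linear_combination (n : DualNumber ℚ) * this
    rw [this]; simp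
  · intro i hi
    have hi : i < k := Finset.mem_range.1 hi
    have h2 : 2 ≤ p ^ (k - i) :=
      (hp.out.two_le.trans (Nat.le_self_pow (by omega) p))
    obtain ⟨c, hc⟩ := Nat.exists_eq_add_of_le h2
    rw [hc, pow_add, pow_two]
    simp [WittVector.coeff_mk]

lemma teich_one_add_poly (k : ℕ) : ∃ g : Polynomial ℤ,
    (WittVector.teichmuller p (1 + Polynomial.X : Polynomial ℤ) - 1).coeff k
      = Polynomial.X + Polynomial.X ^ 2 * g := by
  set P := (WittVector.teichmuller p (1 + Polynomial.X : Polynomial ℤ) - 1).coeff k with hP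
  have h : Polynomial.aeval (DualNumber.eps : DualNumber ℚ) P = DualNumber.eps := by
    have h1 : WittVector.map (Polynomial.aeval (R := ℤ) (DualNumber.eps : DualNumber ℚ)).toRingHom
        (WittVector.teichmuller p (1 + Polynomial.X : Polynomial ℤ) - 1)
        = WittVector.mk p (fun _ => (DualNumber.eps : DualNumber ℚ)) := by
      rw [map_sub, _root_.map_one, WittVector.map_teichmuller, ← teich_one_add_dual]
      simp
    have h2 := congrArg (fun w => WittVector.coeff w k) h1
    simp only [WittVector.map_coeff, WittVector.coeff_mk] at h2
    exact h2
  have e1 := Polynomial.X_mul_divX_add P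
  have e2 := Polynomial.X_mul_divX_add P.divX
  have eq : P = Polynomial.C (P.coeff 0) + Polynomial.X * Polynomial.C (P.divX.coeff 0)
      + Polynomial.X ^ 2 * P.divX.divX := by
    linear_combination -e1 - Polynomial.X * e2
  rw [eq] at h
  simp only [map_add, _root_.map_mul, map_pow, Polynomial.aeval_X, Polynomial.aeval_C] at h
  rw [pow_two, DualNumber.eps_mul_eps, zero_mul, add_zero] at h
  have f1 := congrArg TrivSqZeroExt.fst h
  have f2 := congrArg TrivSqZeroExt.snd h
  simp at f1 f2
  refine ⟨P.divX.divX, ?_⟩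
  conv_lhs => rw [eq]
  have f2' : P.divX.coeff 0 = 1 := by simpa using f2
  rw [f2', f1]; simp

lemma teich_one_add_val {L : Type*} [Field L] (v : AddValuation L (WithTop ℤ)) {ε : L} {s : ℤ}
    (hs : 0 < s) (hε : v ε = (s : WithTop ℤ)) (k : ℕ) :
    v ((WittVector.teichmuller p (1 + ε) - 1).coeff k) = (s : WithTop ℤ) := by
  obtain ⟨g, hg⟩ := teich_one_add_poly (p := p) k
  have h1 : WittVector.map (Polynomial.aeval (R := ℤ) ε).toRingHom
        (WittVector.teichmuller p (1 + Polynomial.X : Polynomial ℤ) - 1)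
        = WittVector.teichmuller p (1 + ε) - 1 := by
      rw [map_sub, _root_.map_one, WittVector.map_teichmuller]
      simp
  rw [← h1, WittVector.map_coeff, hg]
  have hε0 : (0 : WithTop ℤ) ≤ v ε := by rw [hε]; exact_mod_cast hs.le
  have hint : ∀ g : Polynomial ℤ, (0 : WithTop ℤ) ≤ v (Polynomial.aeval ε g) := by
    intro g
    have hz : ∀ n : ℤ, (n : L) ∈ vInt v := fun n => intCast_mem _ n
    rw [Polynomial.aeval_eq_sum_range]
    refine v.map_le_sum ?_
    intro i _
    rw [zsmul_eq_mul]
    exact (vInt v).mul_mem (hz _) ((vInt v).pow_mem hε0 i)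
  have : (Polynomial.aeval (R := ℤ) ε).toRingHom (Polynomial.X + Polynomial.X ^ 2 * g)
     = ε + ε ^ 2 * Polynomial.aeval ε g := by simp
  rw [this, v.map_add_eq_of_lt_left, hε]
  have h2 := val_mul_ge v (val_pow_ge v hε.ge 2) (s := 0) (hint g)
  refine lt_of_lt_of_le ?_ h2
  rw [hε]
  exact_mod_cast (by omega)

/-- The exact valuation of the coordinates of `[y] - [x]`. -/
lemma teich_sub_val {L : Type*} [Field L] [CharP L p] (v : AddValuation L (WithTop ℤ)) {x y : L}
    {a s : ℤ} (hs : 0 < s) (hx : v x = (a : WithTop ℤ)) (hy : v (y - x) = ((a + s : ℤ) : WithTop ℤ))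
    (k : ℕ) :
    v ((WittVector.teichmuller p y - WittVector.teichmuller p x).coeff k)
      = (((p ^ k : ℕ) * a + s : ℤ) : WithTop ℤ) := by
  have hx0 : x ≠ 0 := by
    rintro rfl
    simp at hx
  have hy' : y = x * (1 + (y - x) / x) := by field_simp; ring
  have hε : v ((y - x) / x) = (s : WithTop ℤ) := by
    have h1 : v (y - x) = v ((y - x) / x) + v x := by rw [← v.map_mul, div_mul_cancel₀ _ hx0]
    rw [hy, hx] at h1
    cases h : v ((y - x) / x) with
    | top => rw [h] at h1; simp at h1
    | coe b =>
      rw [h] at h1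
      have : a + s = b + a := by exact_mod_cast h1
      exact_mod_cast (by omega)
  have e : WittVector.teichmuller p y - WittVector.teichmuller p x
    = WittVector.teichmuller p x * (WittVector.teichmuller p (1 + (y - x) / x) - 1) := by
    conv_lhs => rw [hy', _root_.map_mul]
    ring
  rw [e, teich_mul_coeff]
  exact val_mul_eq v (val_pow_eq v hx _) (teich_one_add_val v hs hε k)

end TeichOne
end HPV

namespace HPV
section Ram
variable {p : ℕ} [hp : Fact p.Prime]

lemma map_iterV {R S : Type*} [CommRing R] [CommRing S] (f : R →+* S) (x : WittVector p R) (i : ℕ) :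
    WittVector.map f (WittVector.verschiebung^[i] x)
      = WittVector.verschiebung^[i] (WittVector.map f x) := by
  induction i with
  | zero => rfl
  | succ i ih =>
    rw [Function.iterate_succ_apply', Function.iterate_succ_apply', WittVector.map_verschiebung, ih]

lemma iterV_add {R : Type*} [CommRing R] (x y : WittVector p R) (i : ℕ) :
    WittVector.verschiebung^[i] (x + y)
      = WittVector.verschiebung^[i] x + WittVector.verschiebung^[i] y :=
  iterate_map_add _ _ _ _

lemma iterV_sub {R : Type*} [CommRing R] (x y : WittVector p R) (i : ℕ) :
    WittVector.verschiebung^[i] (x - y)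
      = WittVector.verschiebung^[i] x - WittVector.verschiebung^[i] y :=
  iterate_map_sub _ _ _ _

lemma iterV_mem_IntW' {R : Type*} [CommRing R] (O : Subring R) (x : WittVector p R) {i m : ℕ}
    (h : x ∈ IntW p O m) : (WittVector.verschiebung^[i] x) ∈ IntW p O m := by
  intro k hk
  by_cases hki : k < i
  · rw [WittVector.iterate_verschiebung_coeff_eq_zero _ hki]
    exact O.zero_mem
  · obtain ⟨j, rfl⟩ := Nat.exists_eq_add_of_le (not_lt.1 hki)
    rw [add_comm, WittVector.iterate_verschiebung_coeff]
    exact h _ (by omega)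

variable {E : Type*} [Field E]

/-- Reduced elements. -/
def Red (p : ℕ) (v : AddValuation E (WithTop ℤ)) (σ : E →+* E) (e s : ℤ) (x : E) : Prop :=
  ∃ j : ℤ, ¬ (p : ℤ) ∣ j ∧ j < 0 ∧ v x = ((e * j : ℤ) : WithTop ℤ) ∧
    v (σ x - x) = ((e * j + s : ℤ) : WithTop ℤ)

lemma reduce (v : AddValuation E (WithTop ℤ)) (σ : E →+* E) {e s : ℤ} (he : 0 < e)
    (hB : ∀ x : E, ∃ f : E, σ f = f ∧ (x = f ∨ ∃ j : ℤ, ¬ (p : ℤ) ∣ j ∧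
      v (x - f) = ((e * j : ℤ) : WithTop ℤ) ∧
      v (σ (x - f) - (x - f)) = ((e * j + s : ℤ) : WithTop ℤ)))
    (m : ℕ) (b : WittVector p E) :
    ∃ (b' a t : WittVector p E) (x : ℕ → E), WittVector.map σ b' = b' ∧
      (∀ m', a ∈ IntW p (vInt v) m') ∧ (∀ i, x i = 0 ∨ Red p v σ e s (x i)) ∧
      b = b' + a + (∑ i ∈ Finset.range m,
        WittVector.verschiebung^[i] (WittVector.teichmuller p (x i)))
        + WittVector.verschiebung^[m] t := by
  induction m with
  | zero => exact ⟨0, 0, b, 0, by simp, fun _ => Subring.zero_mem _, by simp, by simp⟩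
  | succ m ih =>
    obtain ⟨b', a, t, x, hb', ha, hx, hb⟩ := ih
    obtain ⟨f, hf, hred⟩ := hB (t.coeff 0)
    set y := t.coeff 0 - f with hy
    set w := (WittVector.teichmuller p f + WittVector.teichmuller p y).shift 1 with hw
    have ht : t = WittVector.teichmuller p f + WittVector.teichmuller p y
        + WittVector.verschiebung (t.shift 1 - w) := by
      have e1 := teich_add_V t
      have e2 := teich_add_V (WittVector.teichmuller p f + WittVector.teichmuller p y)
      rw [WittVector.add_coeff_zero, WittVector.teichmuller_coeff_zero,
        WittVector.teichmuller_coeff_zero, ← hw, show f + y = t.coeff 0 by rw [hy]; ring] at e2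
      have e3 : WittVector.verschiebung (t.shift 1 - w)
          = WittVector.verschiebung (t.shift 1) - WittVector.verschiebung w :=
        iterV_sub (t.shift 1) w 1
      rw [e3]
      linear_combination e2 - e1
    have hVt : WittVector.verschiebung^[m] t =
        WittVector.verschiebung^[m] (WittVector.teichmuller p f)
        + WittVector.verschiebung^[m] (WittVector.teichmuller p y)
        + WittVector.verschiebung^[m+1] (t.shift 1 - w) := by
      conv_lhs => rw [ht]
      rw [iterV_add, iterV_add, Function.iterate_succ_apply]
    have hf' : WittVector.map σ (b' + WittVector.verschiebung^[m] (WittVector.teichmuller p f))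
        = b' + WittVector.verschiebung^[m] (WittVector.teichmuller p f) := by
      rw [map_add, hb', map_iterV, WittVector.map_teichmuller, hf]
    by_cases hy0 : 0 ≤ v y
    · refine ⟨b' + WittVector.verschiebung^[m] (WittVector.teichmuller p f),
        a + WittVector.verschiebung^[m] (WittVector.teichmuller p y), t.shift 1 - w,
        fun i => if i = m then 0 else x i, hf', ?_, ?_, ?_⟩
      · intro m'
        exact Subring.add_mem _ (ha m') (iterV_mem_IntW' _ _ (teich_mem_IntW _ hy0 _))
      · intro i
        by_cases hi : i = m
        · simp [hi]
        · simpa [hi] using hx i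
      · rw [Finset.sum_range_succ]
        have : ∑ i ∈ Finset.range m, WittVector.verschiebung^[i]
            (WittVector.teichmuller p (if i = m then 0 else x i))
            = ∑ i ∈ Finset.range m, WittVector.verschiebung^[i] (WittVector.teichmuller p (x i)) := by
          refine Finset.sum_congr rfl fun i hi => ?_
          rw [if_neg (Finset.mem_range.1 hi).ne]
        rw [this]
        simp only [if_true]
        rw [WittVector.teichmuller_zero, iterate_map_zero, hb, hVt]
        ring
    · refine ⟨b' + WittVector.verschiebung^[m] (WittVector.teichmuller p f),
        a, t.shift 1 - w,
        fun i => if i = m then y else x i, hf', ha, ?_, ?_⟩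
      · intro i
        by_cases hi : i = m
        · right
          simp only [hi, if_true]
          rcases hred with h | ⟨j, h1, h2, h3⟩
          · exfalso; apply hy0; rw [hy, h]; simp
          · refine ⟨j, h1, ?_, h2, h3⟩
            by_contra hj
            apply hy0
            rw [h2]
            exact_mod_cast mul_nonneg he.le (not_lt.1 hj)
        · simpa [hi] using hx i
      · rw [Finset.sum_range_succ]
        have : ∑ i ∈ Finset.range m, WittVector.verschiebung^[i]
            (WittVector.teichmuller p (if i = m then y else x i))
            = ∑ i ∈ Finset.range m, WittVector.verschiebung^[i] (WittVector.teichmuller p (x i)) := by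
          refine Finset.sum_congr rfl fun i hi => ?_
          rw [if_neg (Finset.mem_range.1 hi).ne]
        rw [this]
        simp only [if_true]
        rw [hb, hVt]
        ring

variable [CharP E p]

lemma approx_sum {ι : Type*} (v : AddValuation E (WithTop ℤ)) {s : ℤ} (hs : 0 < s) (m : ℕ) (r : ℤ)
    (T : Finset ι) (y : ι → WittVector p E)
    (hy : ∀ i ∈ T, ∀ k < m, (((p ^ k : ℕ) * r + s : ℤ) : WithTop ℤ) ≤ v ((y i).coeff k)) :
    (∀ k < m, (((p ^ k : ℕ) * r + s : ℤ) : WithTop ℤ) ≤ v ((∑ i ∈ T, y i).coeff k)) ∧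
    ∀ k < m, (((p ^ k : ℕ) * r + s + 1 : ℤ) : WithTop ℤ) ≤
        v ((∑ i ∈ T, y i).coeff k - ∑ i ∈ T, (y i).coeff k) := by
  induction T using Finset.induction_on with
  | empty => simp
  | insert i T hi ih =>
    obtain ⟨h1, h2⟩ := ih (fun j hj => hy j (Finset.mem_insert_of_mem hj))
    have h3 := approx_add v hs m r (y i) (∑ i ∈ T, y i) (hy i (Finset.mem_insert_self _ _)) h1
    have key : ∀ k < m, (((p ^ k : ℕ) * r + s + 1 : ℤ) : WithTop ℤ) ≤
        v ((∑ i ∈ insert i T, y i).coeff k - ∑ i ∈ insert i T, (y i).coeff k) := by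
      intro k hk
      rw [Finset.sum_insert hi, Finset.sum_insert hi]
      have := v.map_le_add (h3 k hk) (h2 k hk)
      convert this using 2
      ring
    refine ⟨?_, key⟩
    intro k hk
    have e : (∑ i ∈ insert i T, y i).coeff k = ((∑ i ∈ insert i T, y i).coeff k
      - ∑ i ∈ insert i T, (y i).coeff k) + ∑ i ∈ insert i T, (y i).coeff k := by ring
    rw [e]
    refine v.map_le_add (le_trans (by exact_mod_cast (by omega)) (key k hk)) (v.map_le_sum ?_)
    intro j hj
    exact hy j hj k hk

lemma exists_scaled (v : AddValuation E (WithTop ℤ)) (N : ℕ) (hN : N ≠ 0) :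
    ∃ w : AddValuation E (WithTop ℤ), ∀ x, w x = N • v x := by
  refine ⟨AddValuation.map (nsmulAddMonoidHom N) ?_ ?_ v, fun x => rfl⟩
  · obtain ⟨k, rfl⟩ := Nat.exists_eq_succ_of_ne_zero hN
    simp [succ_nsmul]
  · intro a b hab
    exact nsmul_le_nsmul_right hab N

lemma ram_step (v : AddValuation E (WithTop ℤ)) (σ : E →+* E) (hv : ∀ x, v (σ x) = v x)
    {e s : ℤ} (he : 0 < e) (hs : 0 < s)
    (hB : ∀ x : E, ∃ f : E, σ f = f ∧ (x = f ∨ ∃ j : ℤ, ¬ (p : ℤ) ∣ j ∧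
      v (x - f) = ((e * j : ℤ) : WithTop ℤ) ∧
      v (σ (x - f) - (x - f)) = ((e * j + s : ℤ) : WithTop ℤ)))
    (n : ℕ) : ∃ m, n ≤ m ∧ ∀ b : WittVector p E,
      WittVector.map σ b - b ∈ IntW p (vInt v) m →
      ∃ b', WittVector.map σ b' = b' ∧ b - b' ∈ IntW p (vInt v) n := by
  obtain ⟨S, rfl⟩ := Int.eq_ofNat_of_zero_le hs.le
  have hS : 0 < S := by exact_mod_cast hs
  refine ⟨n + S, by omega, ?_⟩
  intro b hb
  obtain ⟨b', a, t, x, hb', ha, hx, hdec⟩ := reduce (p := p) v σ he hB (n + S) b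
  set m := n + S with hm
  refine ⟨b', hb', ?_⟩
  have hO : ∀ x ∈ vInt v, σ x ∈ vInt v := by
    intro x hx; rw [mem_vInt, hv]; exact hx
  set y : ℕ → WittVector p E := fun i => WittVector.verschiebung^[i]
    (WittVector.teichmuller p (σ (x i)) - WittVector.teichmuller p (x i)) with hy
  have hysum : ∑ i ∈ Finset.range m, y i ∈ IntW p (vInt v) m := by
    have e1 : ∑ i ∈ Finset.range m, y i = (WittVector.map σ b - b)
        - (WittVector.map σ a - a)
        - (WittVector.map σ (WittVector.verschiebung^[m] t) - WittVector.verschiebung^[m] t) := by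
      rw [hdec]
      simp only [map_add, hb', map_sum, hy, iterV_sub, Finset.sum_sub_distrib, map_iterV,
        WittVector.map_teichmuller]
      ring
    rw [e1]
    refine Subring.sub_mem _ (Subring.sub_mem _ hb (Subring.sub_mem _
      (map_mem_IntW _ _ hO (ha m)) (ha m))) (Subring.sub_mem _ ?_ (iterV_mem_IntW _ _ le_rfl))
    rw [map_iterV]; exact iterV_mem_IntW _ _ le_rfl
  have hzero : ∀ i < n, x i = 0 := by
    by_contra hcon
    push Not at hcon
    obtain ⟨i1, hi1, hxi1⟩ := hcon
    -- the set of indices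
    set J := (Finset.range m).filter (fun i => x i ≠ 0) with hJ
    have hred : ∀ i ∈ J, Red p v σ e S (x i) := fun i hi =>
      (hx i).resolve_left (Finset.mem_filter.1 hi).2
    have hj' : ∀ i, ∃ j : ℤ, i ∈ J → (¬ (p : ℤ) ∣ j ∧ j < 0 ∧ v (x i) = ((e * j : ℤ) : WithTop ℤ) ∧
      v (σ (x i) - x i) = ((e * j + S : ℤ) : WithTop ℤ)) := by
      intro i
      by_cases hi : i ∈ J
      · obtain ⟨j, h⟩ := hred i hi
        exact ⟨j, fun _ => h⟩
      · exact ⟨0, fun h => absurd h hi⟩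
    choose j hj using hj'
    have hi1J : i1 ∈ J := Finset.mem_filter.2 ⟨Finset.mem_range.2 (by omega), hxi1⟩
    obtain ⟨i0, hi0J, hmin⟩ := Finset.exists_min_image J (fun i => ((p ^ (m - i) : ℕ) : ℤ) * j i)
      ⟨i1, hi1J⟩
    have hJm : ∀ i ∈ J, i < m := fun i hi => Finset.mem_range.1 (Finset.mem_filter.1 hi).1
    have hppos : ∀ k : ℕ, (0 : ℤ) < ((p ^ k : ℕ) : ℤ) := fun k => by
      exact_mod_cast pow_pos hp.out.pos k
    have hdist : ∀ i ∈ J, ∀ i' ∈ J, i < i' →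
        ((p ^ (m - i) : ℕ) : ℤ) * j i ≠ ((p ^ (m - i') : ℕ) : ℤ) * j i' := by
      intro i hi i' hi' hlt heq
      have hm' := hJm i' hi'
      apply (hj i' hi').1
      have : m - i = (m - i') + (i' - i - 1) + 1 := by omega
      rw [this, pow_succ, pow_add] at heq
      refine ⟨((p ^ (i' - i - 1) : ℕ) : ℤ) * j i, ?_⟩
      have h0 := (hppos (m - i')).ne'
      apply mul_left_cancel₀ h0
      rw [← heq]; push_cast; ring
    have hdist' : ∀ i ∈ J, i ≠ i0 →
        ((p ^ (m - i0) : ℕ) : ℤ) * j i0 < ((p ^ (m - i) : ℕ) : ℤ) * j i := by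
      intro i hi hne
      refine lt_of_le_of_ne (hmin i hi) ?_
      rcases lt_or_gt_of_ne hne with h | h
      · exact (hdist i hi i0 hi0J h).symm
      · exact hdist i0 hi0J i hi h
    obtain ⟨w, hw⟩ := exists_scaled v (p ^ m) (pow_pos hp.out.pos m).ne'
    have hwv : ∀ (z : E) (c : ℤ), v z = (c : WithTop ℤ) →
        w z = ((((p ^ m : ℕ) : ℤ) * c : ℤ) : WithTop ℤ) := by
      intro z c h
      rw [hw, h, ← WithTop.coe_nsmul]; simp
    set r : ℤ := ((p ^ (m - i0) : ℕ) : ℤ) * j i0 * e with hr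
    set s' : ℤ := ((p ^ m : ℕ) : ℤ) * S with hs'
    have hs'0 : 0 < s' := mul_pos (hppos m) (by exact_mod_cast hS)
    have hyval : ∀ i ∈ J, ∀ k, i ≤ k → w ((y i).coeff k)
        = (((p ^ k : ℕ) * (((p ^ (m - i) : ℕ) : ℤ) * j i * e) + s' : ℤ) : WithTop ℤ) := by
      intro i hi k hik
      obtain ⟨l, rfl⟩ := Nat.exists_eq_add_of_le hik
      simp only [hy]
      rw [add_comm i l, WittVector.iterate_verschiebung_coeff]
      obtain ⟨-, -, h1, h2⟩ := hj i hi
      rw [hwv _ _ (teich_sub_val v hs h1 h2 l)]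
      congr 1
      have : m = (m - i) + i := by have := hJm i hi; omega
      have h3 : ((p ^ m : ℕ) : ℤ) = ((p ^ (m - i) : ℕ) : ℤ) * ((p ^ i : ℕ) : ℤ) := by
        conv_lhs => rw [this]
        push_cast; ring
      rw [hs', mul_add, h3]
      push_cast; ring
    have hynon : ∀ i ∉ J, i < m → y i = 0 := by
      intro i hi him
      have : x i = 0 := by
        by_contra h
        exact hi (Finset.mem_filter.2 ⟨Finset.mem_range.2 him, h⟩)
      simp only [hy, this, map_zero, sub_self]
      exact iterate_map_zero _ _
    have hylow : ∀ i, ∀ k < i, (y i).coeff k = 0 := fun i k hk =>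
      WittVector.iterate_verschiebung_coeff_eq_zero _ hk
    have hyge : ∀ i ∈ Finset.range m, ∀ k < m,
        (((p ^ k : ℕ) * r + s' : ℤ) : WithTop ℤ) ≤ w ((y i).coeff k) := by
      intro i hi k hk
      by_cases hiJ : i ∈ J
      · by_cases hki : k < i
        · rw [hylow i k hki]; simp
        · rw [hyval i hiJ k (not_lt.1 hki)]
          have h1 := hmin i hiJ
          have h2 : r ≤ ((p ^ (m - i) : ℕ) : ℤ) * j i * e :=
            mul_le_mul_of_nonneg_right h1 he.le
          have := mul_le_mul_of_nonneg_left h2 (hppos k).le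
          exact_mod_cast (by omega)
      · rw [hynon i hiJ (Finset.mem_range.1 hi)]; simp
    obtain ⟨-, h2⟩ := approx_sum w hs'0 m r (Finset.range m) y hyge
    have hm1 : m - 1 < m := by omega
    have h2 := h2 (m - 1) hm1
    set A : ℤ := ((p ^ (m - 1) : ℕ) : ℤ) * r + s' with hA
    have hi0m := hJm i0 hi0J
    have hmain : w ((y i0).coeff (m - 1)) = (A : WithTop ℤ) := by
      rw [hyval i0 hi0J (m - 1) (by omega)]
    have hoth : ((A : ℤ) : WithTop ℤ) <
        w (∑ i ∈ (Finset.range m).erase i0, (y i).coeff (m - 1)) := by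
      refine w.map_lt_sum (WithTop.coe_ne_top) ?_
      intro i hi
      have hne := Finset.ne_of_mem_erase hi
      have him := Finset.mem_range.1 (Finset.mem_of_mem_erase hi)
      by_cases hiJ : i ∈ J
      · rw [hyval i hiJ (m - 1) (by omega)]
        have h1 := hdist' i hiJ hne
        have h2 : r < ((p ^ (m - i) : ℕ) : ℤ) * j i * e := mul_lt_mul_of_pos_right h1 he
        have := mul_lt_mul_of_pos_left h2 (hppos (m - 1))
        exact_mod_cast (by omega)
      · rw [hynon i hiJ him]; simp
    have hsumval : w ((∑ i ∈ Finset.range m, y i).coeff (m - 1)) = (A : WithTop ℤ) := by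
      have e1 : (∑ i ∈ Finset.range m, y i).coeff (m - 1) = (y i0).coeff (m - 1) +
          (∑ i ∈ (Finset.range m).erase i0, (y i).coeff (m - 1)
          + ((∑ i ∈ Finset.range m, y i).coeff (m - 1)
            - ∑ i ∈ Finset.range m, (y i).coeff (m - 1))) := by
        have := Finset.add_sum_erase (Finset.range m) (fun i => (y i).coeff (m - 1))
          (Finset.mem_range.2 hi0m)
        rw [← this]; ring
      rw [e1, w.map_add_eq_of_lt_left, hmain]
      rw [hmain]
      refine w.map_lt_add hoth (lt_of_lt_of_le ?_ h2)
      exact_mod_cast (by omega)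
    have hnn : (0 : WithTop ℤ) ≤ w ((∑ i ∈ Finset.range m, y i).coeff (m - 1)) := by
      rw [hw]; exact nsmul_nonneg (hysum (m - 1) hm1) _
    rw [hsumval] at hnn
    have hA0 : 0 ≤ A := by exact_mod_cast hnn
    -- contradiction
    have hj1 : j i1 ≤ -1 := by have := (hj i1 hi1J).2.1; omega
    have hr1 : r ≤ -((p ^ (S + 1) : ℕ) : ℤ) := by
      have h1 := hmin i1 hi1J
      have h2 : ((p ^ (S + 1) : ℕ) : ℤ) ≤ ((p ^ (m - i1) : ℕ) : ℤ) := by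
        exact_mod_cast Nat.pow_le_pow_right hp.out.pos (by omega)
      have h3 : ((p ^ (m - i1) : ℕ) : ℤ) * j i1 ≤ -((p ^ (m - i1) : ℕ) : ℤ) := by
        nlinarith [hppos (m - i1)]
      have h4 : ((p ^ (m - i0) : ℕ) : ℤ) * j i0 ≤ -((p ^ (S + 1) : ℕ) : ℤ) := by
        omega
      have h5 := hppos (S + 1)
      rw [hr]; nlinarith
    have h6 : ((p ^ (m - 1) : ℕ) : ℤ) * r ≤ -(((p ^ m : ℕ) : ℤ) * ((p ^ S : ℕ) : ℤ)) := by
      have := mul_le_mul_of_nonneg_left hr1 (hppos (m - 1)).le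
      refine this.trans (le_of_eq ?_)
      obtain ⟨q, hq⟩ : ∃ q, m = q + 1 := ⟨m - 1, by omega⟩
      rw [hq]; push_cast; ring
    have h7 : (S : ℤ) < ((p ^ S : ℕ) : ℤ) := by
      exact_mod_cast Nat.lt_pow_self hp.out.one_lt
    have h8 := mul_lt_mul_of_pos_left h7 (hppos m)
    omega
  rw [hdec]
  have e2 : b' + a + (∑ i ∈ Finset.range m,
        WittVector.verschiebung^[i] (WittVector.teichmuller p (x i)))
        + WittVector.verschiebung^[m] t - b' = a + (∑ i ∈ Finset.range m,
        WittVector.verschiebung^[i] (WittVector.teichmuller p (x i)))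
        + WittVector.verschiebung^[m] t := by ring
  rw [e2]
  refine Subring.add_mem _ (Subring.add_mem _ (ha n) (Subring.sum_mem _ ?_))
    (iterV_mem_IntW _ _ (by omega))
  intro i _
  by_cases hi : i < n
  · rw [hzero i hi, WittVector.teichmuller_zero, iterate_map_zero]; exact Subring.zero_mem _
  · exact iterV_mem_IntW _ _ (not_lt.1 hi)

end Ram
end HPV

namespace HPV
section CaseA
variable {p : ℕ} [hp : Fact p.Prime] {E : Type*} [Field E]

lemma val_inv (v : AddValuation E (WithTop ℤ)) {a : E} {r : ℤ} (h : v a = (r : WithTop ℤ)) :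
    v a⁻¹ = ((-r : ℤ) : WithTop ℤ) := by
  have ha : a ≠ 0 := by
    rintro rfl
    simp at h
  have h1 : v a⁻¹ + v a = 0 := by rw [← v.map_mul, inv_mul_cancel₀ ha, v.map_one]
  rw [h] at h1
  cases h2 : v a⁻¹ with
  | top => rw [h2] at h1; simp at h1
  | coe b =>
    rw [h2] at h1
    have : b + r = 0 := by exact_mod_cast h1
    exact_mod_cast (by omega)

lemma val_zpow (v : AddValuation E (WithTop ℤ)) {a : E} {r : ℤ} (h : v a = (r : WithTop ℤ))
    (j : ℤ) : v (a ^ j) = ((j * r : ℤ) : WithTop ℤ) := by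
  obtain ⟨n, rfl | rfl⟩ := j.eq_nat_or_neg
  · rw [zpow_natCast]; exact val_pow_eq v h n
  · rw [zpow_neg, zpow_natCast, val_inv v (val_pow_eq v h n)]
    congr 1; ring

lemma val_exists (v : AddValuation E (WithTop ℤ)) {a : E} (h : a ≠ 0) :
    ∃ r : ℤ, v a = (r : WithTop ℤ) := by
  have := v.ne_top_iff.2 h
  cases h2 : v a with
  | top => exact absurd h2 this
  | coe b => exact ⟨b, rfl⟩

lemma map_fix_unit {R : Type*} [CommRing R] (f : R →+* R) {a z : R} (h : a * z = 1)
    (ha : f a = a) : f z = z := by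
  have h1 : a * f z = 1 := by
    have := congrArg f h
    rwa [_root_.map_mul, _root_.map_one, ha] at this
  calc f z = (a * z) * f z := by rw [h, one_mul]
    _ = z * (a * f z) := by ring
    _ = z := by rw [h1, mul_one]

variable [CharP E p]

lemma unit_IntW (v : AddValuation E (WithTop ℤ)) (x : WittVector p E)
    (hx : ∀ m, x ∈ IntW p (vInt v) m) (h0 : v (x.coeff 0) = 0) :
    ∃ z : WittVector p E, x * z = 1 ∧ ∀ m, z ∈ IntW p (vInt v) m := by
  have hc : ∀ k, x.coeff k ∈ vInt v := fun k => hx (k + 1) k (Nat.lt_succ_self k)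
  have h00 : x.coeff 0 ≠ 0 := by
    intro h; rw [h] at h0; simp at h0
  have hinv : (x.coeff 0)⁻¹ ∈ vInt v := by
    rw [mem_vInt, val_inv v (r := 0) h0]; simp
  have : CharP (vInt v) p := by infer_instance
  let X : WittVector p (vInt v) := WittVector.mk p (fun k => ⟨x.coeff k, hc k⟩)
  let u : (vInt v)ˣ := ⟨⟨x.coeff 0, hc 0⟩, ⟨_, hinv⟩, Subtype.ext (mul_inv_cancel₀ h00),
    Subtype.ext (inv_mul_cancel₀ h00)⟩
  have hX : X.coeff 0 = (u : vInt v) := rfl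
  let U := WittVector.mkUnit hX
  have hU : X * (↑U⁻¹ : WittVector p (vInt v)) = 1 := U.mul_inv
  have hXx : WittVector.map (vInt v).subtype X = x := by
    ext k; rw [WittVector.map_coeff]; rfl
  refine ⟨WittVector.map (vInt v).subtype (↑U⁻¹ : WittVector p (vInt v)), ?_, ?_⟩
  · rw [← hXx, ← _root_.map_mul, hU, _root_.map_one]
  · intro m k _
    rw [WittVector.map_coeff]
    exact (WittVector.coeff (↑U⁻¹ : WittVector p (vInt v)) k).2

lemma sum_orbit_fixed {σ : E ≃+* E} (hσ : σ ^ p = 1) (z : WittVector p E) :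
    WittVector.map (σ : E →+* E) (∑ i ∈ Finset.range p,
      WittVector.map ((σ ^ i : E ≃+* E) : E →+* E) z)
      = ∑ i ∈ Finset.range p, WittVector.map ((σ ^ i : E ≃+* E) : E →+* E) z := by
  rw [map_sum]
  have h1 : ∀ i, WittVector.map (σ : E →+* E) (WittVector.map ((σ ^ i : E ≃+* E) : E →+* E) z)
      = WittVector.map ((σ ^ (i + 1) : E ≃+* E) : E →+* E) z := by
    intro i
    ext k
    simp only [WittVector.map_coeff]
    rw [pow_succ']; rfl
  simp only [h1]
  have h2 := Finset.sum_range_succ (fun i => WittVector.map ((σ ^ i : E ≃+* E) : E →+* E) z) p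
  rw [Finset.sum_range_succ', hσ, ← pow_zero σ] at h2
  exact add_right_cancel h2

lemma caseA (v : AddValuation E (WithTop ℤ)) {σ : E ≃+* E} (hσ : σ ^ p = 1)
    (hv : ∀ x, v (σ x) = v x) {y : E} (hy : 0 ≤ v y)
    (hT : v (∑ i ∈ Finset.range p, (σ ^ i : E ≃+* E) y) = 0) (n : ℕ) (b : WittVector p E)
    (hb : WittVector.map (σ : E →+* E) b - b ∈ IntW p (vInt v) n) :
    ∃ b', WittVector.map (σ : E →+* E) b' = b' ∧ b - b' ∈ IntW p (vInt v) n := by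
  have hvi : ∀ i : ℕ, ∀ x, v ((σ ^ i : E ≃+* E) x) = v x := by
    intro i
    induction i with
    | zero => intro x; rfl
    | succ i ih => intro x; rw [pow_succ']; exact (hv _).trans (ih x)
  have hO : ∀ x ∈ vInt v, (σ : E →+* E) x ∈ vInt v := by
    intro x hx; rw [mem_vInt]; exact (hv x).symm ▸ hx
  set φ : ℕ → WittVector p E →+* WittVector p E :=
    fun i => WittVector.map ((σ ^ i : E ≃+* E) : E →+* E) with hφ
  set Y := WittVector.teichmuller p y
  set T := ∑ i ∈ Finset.range p, φ i Y with hTdef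
  have hφY : ∀ i m, φ i Y ∈ IntW p (vInt v) m := by
    intro i m
    simp only [hφ, Y, WittVector.map_teichmuller]
    refine teich_mem_IntW _ ?_ _
    rw [mem_vInt]; exact (hvi i y).symm ▸ hy
  have hTint : ∀ m, T ∈ IntW p (vInt v) m := fun m => Subring.sum_mem _ fun i _ => hφY i m
  have hT0 : v (T.coeff 0) = 0 := by
    have : T.coeff 0 = ∑ i ∈ Finset.range p, (σ ^ i : E ≃+* E) y := by
      have h1 : T.coeff 0 = WittVector.constantCoeff T := rfl
      rw [h1, hTdef, map_sum]
      refine Finset.sum_congr rfl fun i _ => ?_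
      simp only [hφ, Y, WittVector.map_teichmuller]
      exact WittVector.teichmuller_coeff_zero p _
    rw [this, hT]
  obtain ⟨z, hz, hzint⟩ := unit_IntW v T hTint hT0
  have hTfix : WittVector.map (σ : E →+* E) T = T := sum_orbit_fixed hσ Y
  have hzfix := map_fix_unit (WittVector.map (σ : E →+* E)) hz hTfix
  set S := ∑ i ∈ Finset.range p, φ i (Y * b) with hS
  have hSfix : WittVector.map (σ : E →+* E) S = S := sum_orbit_fixed hσ (Y * b)
  have hφb : ∀ i, φ i b - b ∈ IntW p (vInt v) n := by
    intro i
    induction i with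
    | zero =>
      have : φ 0 b = b := by ext k; simp only [hφ, WittVector.map_coeff]; rfl
      rw [this, sub_self]; exact Subring.zero_mem _
    | succ i ih =>
      have h1 : φ (i + 1) b - b = WittVector.map (σ : E →+* E) (φ i b - b)
          + (WittVector.map (σ : E →+* E) b - b) := by
        have : φ (i + 1) b = WittVector.map (σ : E →+* E) (φ i b) := by
          ext k
          simp only [hφ, WittVector.map_coeff]
          rw [pow_succ']; rfl
        rw [this, map_sub]; ring
      rw [h1]
      exact Subring.add_mem _ (map_mem_IntW _ _ hO ih) hb
  refine ⟨z * S, by rw [_root_.map_mul, hzfix, hSfix], ?_⟩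
  have h1 : b - z * S = z * ∑ i ∈ Finset.range p, -(φ i Y * (φ i b - b)) := by
    have h2 : ∑ i ∈ Finset.range p, -(φ i Y * (φ i b - b)) = T * b - S := by
      rw [hTdef, hS, Finset.sum_mul, ← Finset.sum_sub_distrib]
      refine Finset.sum_congr rfl fun i _ => ?_
      rw [_root_.map_mul]; ring
    rw [h2]
    linear_combination (-b) * hz
  rw [h1]
  refine Subring.mul_mem _ (hzint n) (Subring.sum_mem _ fun i _ => Subring.neg_mem _
    (Subring.mul_mem _ (hφY i n) (hφb i)))

end CaseA
end HPV

namespace HPV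
section Dich
variable {p : ℕ} [hp : Fact p.Prime] {E : Type*} [Field E]

lemma dominant (v : AddValuation E (WithTop ℤ)) {ι : Type*} (T : Finset ι) (z : ι → E)
    (hne : ∃ i ∈ T, z i ≠ 0)
    (hd : ∀ i ∈ T, ∀ j ∈ T, z i ≠ 0 → i ≠ j → v (z i) ≠ v (z j)) :
    ∃ i0 ∈ T, z i0 ≠ 0 ∧ (∀ i ∈ T, i ≠ i0 → v (z i0) < v (z i)) ∧
      v (∑ i ∈ T, z i) = v (z i0) := by
  obtain ⟨i1, hi1, hz1⟩ := hne
  obtain ⟨i0, hi0, hmin⟩ := Finset.exists_min_image T (fun i => v (z i)) ⟨i1, hi1⟩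
  have hz0 : z i0 ≠ 0 := by
    intro h
    have := hmin i1 hi1
    rw [h, v.map_zero, top_le_iff, v.top_iff] at this
    exact hz1 this
  have hlt : ∀ i ∈ T, i ≠ i0 → v (z i0) < v (z i) := fun i hi hne =>
    lt_of_le_of_ne (hmin i hi) (hd i0 hi0 i hi hz0 (Ne.symm hne))
  refine ⟨i0, hi0, hz0, hlt, ?_⟩
  rw [← Finset.add_sum_erase T z hi0]
  refine v.map_add_eq_of_lt_left ?_
  refine v.map_lt_sum (v.ne_top_iff.2 hz0) ?_
  intro i hi
  exact hlt i (Finset.mem_of_mem_erase hi) (Finset.ne_of_mem_erase hi)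

/-- The least positive value. -/
lemma exists_unif (v : AddValuation E (WithTop ℤ)) {t : E} (ht : 0 < v t) (ht0 : t ≠ 0) :
    ∃ (e : ℤ) (π : E), 0 < e ∧ v π = (e : WithTop ℤ) ∧
      ∀ x : E, x ≠ 0 → ∃ j : ℤ, v x = ((e * j : ℤ) : WithTop ℤ) := by
  have hex : ∃ k : ℕ, 0 < k ∧ ∃ x : E, v x = ((k : ℤ) : WithTop ℤ) := by
    obtain ⟨r, hr⟩ := val_exists v ht0
    rw [hr] at ht
    have hr0 : 0 < r := by exact_mod_cast ht
    refine ⟨r.toNat, by omega, t, ?_⟩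
    rw [hr, Int.toNat_of_nonneg hr0.le]
  obtain ⟨hpos, π, hπ⟩ := Nat.find_spec hex
  set k := Nat.find hex with hk
  refine ⟨k, π, by exact_mod_cast hpos, hπ, ?_⟩
  intro x hx
  obtain ⟨r, hr⟩ := val_exists v hx
  have hk0 : (0 : ℤ) < k := by exact_mod_cast hpos
  have h1 : v (x * π ^ (-(r / k))) = ((r % k : ℤ) : WithTop ℤ) := by
    rw [val_mul_eq v hr (val_zpow v hπ (-(r / k)))]
    congr 1
    have := Int.emod_add_mul_ediv r k
    linarith
  have h2 : r % k = 0 := by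
    by_contra hne
    have h3 := Int.emod_nonneg r hk0.ne'
    have h4 := Int.emod_lt_of_pos r hk0
    have := Nat.find_min hex (m := (r % k).toNat) (by omega)
    apply this
    refine ⟨by omega, x * π ^ (-(r / k)), ?_⟩
    rw [h1, Int.toNat_of_nonneg h3]
  refine ⟨r / k, ?_⟩
  rw [hr]
  congr 1
  have := Int.emod_add_mul_ediv r k
  linarith

lemma pos_pow (v : AddValuation E (WithTop ℤ)) {x : E} {n : ℕ} (h : 0 < v (x ^ n)) :
    0 < v x := by
  by_contra hx
  push Not at hx
  rw [v.map_pow] at h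
  exact absurd (nsmul_nonpos hx n) (not_le.2 h)

lemma prod_congr_mod (v : AddValuation E (WithTop ℤ)) (a c : ℕ → E) (n : ℕ)
    (ha : ∀ i, 0 ≤ v (a i)) (hc : ∀ i, 0 ≤ v (c i)) (h : ∀ i, 0 < v (a i - c i)) :
    0 < v (∏ i ∈ Finset.range n, a i - ∏ i ∈ Finset.range n, c i) := by
  induction n with
  | zero => simp
  | succ n ih =>
    rw [Finset.prod_range_succ, Finset.prod_range_succ]
    have e : (∏ i ∈ Finset.range n, a i) * a n - (∏ i ∈ Finset.range n, c i) * c n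
      = (∏ i ∈ Finset.range n, a i - ∏ i ∈ Finset.range n, c i) * a n
        + (∏ i ∈ Finset.range n, c i) * (a n - c n) := by ring
    rw [e]
    have hci : ∏ i ∈ Finset.range n, c i ∈ vInt v := Subring.prod_mem _ fun i _ => hc i
    refine v.map_lt_add ?_ ?_
    · rw [v.map_mul]; exact lt_of_lt_of_le ih (le_add_of_nonneg_right (ha n))
    · rw [v.map_mul]; exact lt_of_lt_of_le (h n) (le_add_of_nonneg_left hci)

lemma iter_val (v : AddValuation E (WithTop ℤ)) {σ : E ≃+* E} (hv : ∀ x, v (σ x) = v x)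
    (i : ℕ) : ∀ x, v ((σ ^ i : E ≃+* E) x) = v x := by
  induction i with
  | zero => intro x; rfl
  | succ i ih => intro x; rw [pow_succ']; exact (hv _).trans (ih x)

lemma iter_fix {σ : E ≃+* E} {f : E} (hf : σ f = f)
    (i : ℕ) : (σ ^ i : E ≃+* E) f = f := by
  induction i with
  | zero => rfl
  | succ i ih => rw [pow_succ']; exact (congrArg σ ih).trans hf

lemma norm_fixed {σ : E ≃+* E} (hσ : σ ^ p = 1) (z : E) :
    σ (∏ i ∈ Finset.range p, (σ ^ i : E ≃+* E) z)
      = ∏ i ∈ Finset.range p, (σ ^ i : E ≃+* E) z := by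
  rw [map_prod]
  have h1 : ∀ i, σ ((σ ^ i : E ≃+* E) z) = (σ ^ (i + 1) : E ≃+* E) z := by
    intro i; rw [pow_succ']; rfl
  simp only [h1]
  by_cases hz : z = 0
  · simp [hz]
  have h2 := Finset.prod_range_succ (fun i => (σ ^ i : E ≃+* E) z) p
  rw [Finset.prod_range_succ', hσ, ← pow_zero σ] at h2
  exact mul_right_cancel₀ (by simpa using hz) h2

lemma fix_zpow {σ : E ≃+* E} {f : E} (hf : σ f = f) (j : ℤ) : σ (f ^ j) = f ^ j := by
  rw [map_zpow₀, hf]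

/-- If the trace is never a unit, the action on the residue field is trivial. -/
lemma trivial_residue (v : AddValuation E (WithTop ℤ)) {σ : E ≃+* E} (hσ : σ ^ p = 1)
    (hv : ∀ x, v (σ x) = v x)
    (hA : ∀ y, 0 ≤ v y → v (∑ i ∈ Finset.range p, (σ ^ i : E ≃+* E) y) ≠ 0) :
    ∀ y, 0 ≤ v y → 0 < v (σ y - y) := by
  let I : Ideal (vInt v) :=
    { carrier := {x | 0 < v (x : E)}
      zero_mem' := by simp
      add_mem' := fun {a b} ha hb => v.map_lt_add ha hb
      smul_mem' := by
        intro c x hx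
        have hx : 0 < v (x : E) := hx
        have : 0 < v ((c : E) * (x : E)) := by
          rw [v.map_mul]; exact lt_of_lt_of_le hx (le_add_of_nonneg_left c.2)
        exact this }
  have hI : ∀ x : vInt v, x ∈ I ↔ 0 < v (x : E) := fun x => Iff.rfl
  have hprime : I.IsPrime := by
    refine ⟨?_, ?_⟩
    · rw [Ideal.ne_top_iff_one, hI]; simp
    · intro x y hxy
      rw [hI] at hxy ⊢
      rw [hI]
      by_contra hcon
      push Not at hcon
      have : v (((x * y : vInt v)) : E) = v (x : E) + v (y : E) := v.map_mul _ _
      rw [this] at hxy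
      exact absurd (add_nonpos hcon.1 hcon.2) (not_le.2 hxy)
  have hvi := iter_val v hv
  let φ : ℕ → (vInt v →* (vInt v ⧸ I)) := fun i =>
    ((Ideal.Quotient.mk I).comp
      ((((σ ^ i : E ≃+* E) : E →+* E).comp (vInt v).subtype).codRestrict (vInt v)
        (fun x => by
          have : 0 ≤ v ((σ ^ i : E ≃+* E) (x : E)) := by rw [hvi]; exact x.2
          exact this)) : vInt v →+* (vInt v ⧸ I))
  have hφ : ∀ i j x, φ i x = φ j x → 0 < v ((σ ^ i : E ≃+* E) (x : E) - (σ ^ j : E ≃+* E) (x : E)) := by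
    intro i j x h
    have h' := (Ideal.Quotient.mk_eq_mk_iff_sub_mem _ _).1 h
    exact h'
  have hnoninj : ∃ i < p, ∃ j < p, i < j ∧ φ i = φ j := by
    by_contra hcon
    push Not at hcon
    have hinj : Function.Injective (fun i : Fin p => φ i) := by
      intro i j hij
      by_contra hne
      rcases lt_or_gt_of_ne hne with h | h
      · exact hcon i i.2 j j.2 h hij
      · exact hcon j j.2 i i.2 h hij.symm
    have hli := (linearIndependent_monoidHom (vInt v) (vInt v ⧸ I)).comp _ hinj
    rw [Fintype.linearIndependent_iff] at hli
    have := hli (fun _ => 1) (by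
      funext x
      simp only [one_smul, Finset.sum_apply, Function.comp, Pi.zero_apply]
      have h0 : ∑ i : Fin p, φ i x = ∑ i ∈ Finset.range p, φ i x :=
        (Finset.sum_range (fun i => φ i x)).symm
      rw [h0]
      have hge : 0 ≤ v (∑ i ∈ Finset.range p, (σ ^ i : E ≃+* E) (x : E)) := by
        refine v.map_le_sum fun i _ => ?_
        rw [hvi]; exact x.2
      have hpos := lt_of_le_of_ne hge (hA x x.2).symm
      have : ∑ i ∈ Finset.range p, φ i x = Ideal.Quotient.mk I ⟨_, hge⟩ := by
        have e : (⟨_, hge⟩ : vInt v) = ∑ i ∈ Finset.range p,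
            (⟨(σ ^ i : E ≃+* E) (x : E), (mem_vInt v _).2 ((hvi i x).symm ▸ x.2)⟩ : vInt v) := by
          apply Subtype.ext
          simp
        rw [e, map_sum]; rfl
      rw [this, Ideal.Quotient.eq_zero_iff_mem]
      exact hpos) ⟨0, hp.out.pos⟩
    exact one_ne_zero this
  obtain ⟨i, hi, j, hj, hij, hφij⟩ := hnoninj
  obtain ⟨d, rfl⟩ := Nat.exists_eq_add_of_lt hij
  set d' := d + 1 with hd'
  have h1 : ∀ y, 0 ≤ v y → 0 < v ((σ ^ d' : E ≃+* E) y - y) := by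
    intro y hy
    have := hφ i (i + d + 1) ⟨y, hy⟩ (by rw [hφij])
    have e : (σ ^ i : E ≃+* E) y - (σ ^ (i + d + 1) : E ≃+* E) y
        = (σ ^ i : E ≃+* E) (y - (σ ^ d' : E ≃+* E) y) := by
      rw [map_sub, add_assoc, pow_add]; rfl
    simp only at this
    rw [e, hvi] at this
    rwa [v.map_sub_swap]
  have h2 : ∀ k : ℕ, ∀ y, 0 ≤ v y → 0 < v ((σ ^ (d' * k) : E ≃+* E) y - y) := by
    intro k
    induction k with
    | zero => intro y _; simp
    | succ k ih =>
      intro y hy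
      have e : (σ ^ (d' * (k + 1)) : E ≃+* E) y - y
        = ((σ ^ (d' * k) : E ≃+* E) ((σ ^ d' : E ≃+* E) y) - (σ ^ d' : E ≃+* E) y)
          + ((σ ^ d' : E ≃+* E) y - y) := by
        rw [mul_add, mul_one, pow_add]
        simp
      rw [e]
      exact v.map_lt_add (ih _ (by rw [hvi]; exact hy)) (h1 y hy)
  have hcop : Nat.Coprime d' p :=
    ((Nat.coprime_of_lt_prime (by omega) (by omega) hp.out).symm)
  obtain ⟨k, -, hk⟩ := Nat.exists_mul_mod_eq_one_of_coprime hcop hp.out.one_lt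
  intro y hy
  have h3 := h2 k y hy
  have : σ ^ (d' * k) = σ := by
    rw [← Nat.mod_add_div (d' * k) p, hk, pow_add, pow_mul, hσ]; simp
  rwa [this] at h3

end Dich
end HPV

namespace HPV
section DegP
variable {p : ℕ} [hp : Fact p.Prime] {E : Type*} [Field E]

lemma unram_trivial (v : AddValuation E (WithTop ℤ)) {σ : E ≃+* E} (hσ : σ ^ p = 1)
    (hv : ∀ x, v (σ x) = v x)
    (hsep : ∀ x, 0 ≤ v x → (∃ f, σ f = f ∧ 0 < v (x ^ p - f)) → ∃ g, σ g = g ∧ 0 < v (x - g))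
    (hA : ∀ y, 0 ≤ v y → v (∑ i ∈ Finset.range p, (σ ^ i : E ≃+* E) y) ≠ 0)
    {e : ℤ} (he : 0 < e) (hval : ∀ x : E, x ≠ 0 → ∃ j : ℤ, v x = ((e * j : ℤ) : WithTop ℤ))
    {f : E} (hf : σ f = f) (hfe : v f = (e : WithTop ℤ)) : ∀ x, σ x = x := by
  have hres := trivial_residue v hσ hv hA
  have hvi := iter_val v hv
  have hiter : ∀ i : ℕ, ∀ y, 0 ≤ v y → 0 < v ((σ ^ i : E ≃+* E) y - y) := by
    intro i
    induction i with
    | zero => intro y _; simp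
    | succ k ih =>
      intro y hy
      have e : (σ ^ (k + 1) : E ≃+* E) y - y
        = ((σ ^ k : E ≃+* E) (σ y) - σ y) + (σ y - y) := by
        rw [pow_add]
        simp
      rw [e]
      exact v.map_lt_add (ih _ (by rw [hv]; exact hy)) (hres y hy)
  have happ : ∀ y, 0 ≤ v y → ∃ g, σ g = g ∧ 0 < v (y - g) := by
    intro y hy
    refine hsep y hy ⟨_, norm_fixed hσ y, ?_⟩
    have := prod_congr_mod v (fun i => (σ ^ i : E ≃+* E) y) (fun _ => y) p
      (fun i => by rw [hvi]; exact hy) (fun _ => hy) (fun i => hiter i y hy)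
    rw [Finset.prod_const, Finset.card_range] at this
    rwa [v.map_sub_swap]
  have hf0 : f ≠ 0 := by
    rintro rfl
    simp at hfe
  have hN : ∀ N : ℕ, ∀ y, 0 ≤ v y → ∃ g, σ g = g ∧ ((e * N : ℤ) : WithTop ℤ) ≤ v (y - g) := by
    intro N
    induction N with
    | zero => intro y hy; exact ⟨0, map_zero _, by simpa using hy⟩
    | succ N ih =>
      intro y hy
      obtain ⟨g, hg, hpos⟩ := happ y hy
      have h1 : 0 ≤ v ((y - g) / f) := by
        refine val_div_nonneg v hf0 ?_
        by_cases h0 : y - g = 0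
        · rw [h0]; simp
        · obtain ⟨j, hj⟩ := hval _ h0
          rw [hj] at hpos
          rw [hj, hfe]
          have h2 : 0 < e * j := by exact_mod_cast hpos
          have h3 : 1 ≤ j := by
            by_contra hcon
            push Not at hcon
            nlinarith
          exact_mod_cast (by nlinarith)
      obtain ⟨g', hg', hval'⟩ := ih _ h1
      refine ⟨g + f * g', by rw [map_add, _root_.map_mul, hg, hf, hg'], ?_⟩
      have e1 : y - (g + f * g') = f * ((y - g) / f - g') := by field_simp; ring
      rw [e1]
      have := val_mul_ge v hfe.ge hval'
      convert this using 2
      push_cast; ring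
  have hint : ∀ y, 0 ≤ v y → σ y = y := by
    intro y hy
    by_contra hne
    obtain ⟨r, hr⟩ := val_exists v (sub_ne_zero.2 hne)
    obtain ⟨g, hg, hgv⟩ := hN (r.toNat + 1) y hy
    have h1 : ((e * (r.toNat + 1 : ℕ) : ℤ) : WithTop ℤ) ≤ v (σ y - y) := by
      have e1 : σ y - y = σ (y - g) - (y - g) := by rw [map_sub, hg]; ring
      rw [e1]
      refine v.map_le_sub ?_ hgv
      rw [hv]; exact hgv
    rw [hr] at h1
    have h2 : e * (r.toNat + 1 : ℕ) ≤ r := by exact_mod_cast h1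
    have h3 : ((r.toNat + 1 : ℕ) : ℤ) ≤ e * (r.toNat + 1 : ℕ) := by nlinarith
    have := Int.self_le_toNat r
    push_cast at h3 h2
    omega
  intro x
  by_cases hx : 0 ≤ v x
  · exact hint x hx
  · have hx0 : x ≠ 0 := by rintro rfl; simp at hx
    obtain ⟨r, hr⟩ := val_exists v hx0
    have h1 : 0 ≤ v x⁻¹ := by
      rw [val_inv v hr]
      rw [hr] at hx
      have : ¬ (0 ≤ r) := fun h => hx (by exact_mod_cast h)
      exact_mod_cast (by omega)
    have := hint _ h1
    rw [map_inv₀] at this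
    exact inv_injective this

lemma val_natCast_unit [CharP E p] (v : AddValuation E (WithTop ℤ)) {i : ℕ} (h0 : i ≠ 0) (hi : i < p) :
    v (i : E) = 0 := by
  have hcop : Nat.Coprime i p := (Nat.coprime_of_lt_prime h0 hi hp.out).symm
  obtain ⟨k, -, hk⟩ := Nat.exists_mul_mod_eq_one_of_coprime hcop hp.out.one_lt
  have h1 : (i : E) * (k : E) = 1 := by
    rw [← Nat.cast_mul, ← Nat.mod_add_div (i * k) p, hk]; simp
  have h2 : 0 ≤ v (i : E) := natCast_mem (vInt v) i
  have h3 : 0 ≤ v (k : E) := natCast_mem (vInt v) k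
  have h4 : v (i : E) + v (k : E) = 0 := by rw [← v.map_mul, h1, v.map_one]
  refine le_antisymm ?_ h2
  rw [← h4]; exact le_add_of_nonneg_right h3

lemma one_add_pow_exp (v : AddValuation E (WithTop ℤ)) {ε : E} (hε : 0 ≤ v ε) (i : ℕ) :
    ∃ g, 0 ≤ v g ∧ (1 + ε) ^ i = 1 + i * ε + ε ^ 2 * g := by
  induction i with
  | zero => exact ⟨0, by simp, by simp⟩
  | succ i ih =>
    obtain ⟨g, hg, h⟩ := ih
    refine ⟨i + g + ε * g, ?_, by rw [pow_succ, h]; push_cast; ring⟩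
    exact (vInt v).add_mem ((vInt v).add_mem (natCast_mem _ i) hg) ((vInt v).mul_mem hε hg)

lemma val_pow_sub [CharP E p] (v : AddValuation E (WithTop ℤ)) {σ : E ≃+* E} {π ε : E} {e s : ℤ}
    (hs : 0 < s) (hπ : v π = (e : WithTop ℤ)) (hε : v ε = (s : WithTop ℤ))
    (hσπ : σ π = π * (1 + ε)) {i : ℕ} (h0 : i ≠ 0) (hi : i < p) :
    v (σ (π ^ i) - π ^ i) = ((e * i + s : ℤ) : WithTop ℤ) := by
  have hε0 : 0 ≤ v ε := by rw [hε]; exact_mod_cast hs.le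
  obtain ⟨g, hg, h⟩ := one_add_pow_exp v hε0 i
  have e1 : σ (π ^ i) - π ^ i = π ^ i * (i * ε + ε ^ 2 * g) := by
    rw [map_pow, hσπ, mul_pow, h]; ring
  have h1 : v ((i : E) * ε) = (s : WithTop ℤ) := by
    rw [v.map_mul, val_natCast_unit (p := p) v h0 hi, zero_add, hε]
  have h2 : v ((i : E) * ε + ε ^ 2 * g) = (s : WithTop ℤ) := by
    rw [v.map_add_eq_of_lt_left, h1]
    rw [h1]
    refine lt_of_lt_of_le ?_ (val_mul_ge v (val_pow_ge v hε.ge 2) (s := 0) hg)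
    exact_mod_cast (by omega)
  rw [e1, val_mul_eq v (val_pow_eq v hπ i) h2]
  congr 1; ring

lemma ram_dist (v : AddValuation E (WithTop ℤ)) {σ : E ≃+* E}
    {e : ℤ} (he : 0 < e) {π : E} (hπ : v π = (e : WithTop ℤ))
    (hram : ∀ f, σ f = f → f ≠ 0 → ∃ j : ℤ, v f = ((e * (p * j) : ℤ) : WithTop ℤ))
    {x y : E} (hx : σ x = x) (hy : σ y = y) {i j : ℕ} (hi : i < p) (hj : j < p) (hij : i ≠ j)
    (hzi : x * π ^ i ≠ 0) : v (x * π ^ i) ≠ v (y * π ^ j) := by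
  intro heq
  have hzj : y * π ^ j ≠ 0 := by
    intro h
    rw [h, v.map_zero, v.top_iff] at heq
    exact hzi heq
  obtain ⟨a, ha⟩ := hram _ hx (left_ne_zero_of_mul hzi)
  obtain ⟨b, hb⟩ := hram _ hy (left_ne_zero_of_mul hzj)
  rw [val_mul_eq v ha (val_pow_eq v hπ _), val_mul_eq v hb (val_pow_eq v hπ _)] at heq
  have h1 : e * (p * a) + (i : ℕ) * e = e * (p * b) + (j : ℕ) * e := by exact_mod_cast heq
  have h2 : (p * a + (i : ℕ) : ℤ) = p * b + (j : ℕ) := by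
    apply mul_left_cancel₀ he.ne'
    linarith
  apply hij
  have h3 := congrArg (· % (p : ℤ)) h2
  simp only [Int.mul_add_emod_self_left] at h3
  rw [Int.emod_eq_of_lt (by omega) (by omega), Int.emod_eq_of_lt (by omega) (by omega)] at h3
  exact_mod_cast h3

open Module in
lemma ram_basis (v : AddValuation E (WithTop ℤ)) {σ : E ≃+* E} (hσ : σ ^ p = 1) (hσ1 : σ ≠ 1)
    {e : ℤ} (he : 0 < e) {π : E} (hπ : v π = (e : WithTop ℤ))
    (hram : ∀ f, σ f = f → f ≠ 0 → ∃ j : ℤ, v f = ((e * (p * j) : ℤ) : WithTop ℤ)) (x : E) :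
    ∃ k : ℕ → E, (∀ i, σ (k i) = k i) ∧ x = ∑ i ∈ Finset.range p, k i * π ^ i := by
  have hord : orderOf σ = p := orderOf_eq_prime hσ hσ1
  have hfin : Finite (Subgroup.zpowers σ) := by
    have : IsOfFinOrder σ := by
      rw [← orderOf_pos_iff, hord]; exact hp.out.pos
    exact this.finite_zpowers
  have := Fintype.ofFinite (Subgroup.zpowers σ)
  let F := FixedPoints.subfield (Subgroup.zpowers σ) E
  have hFr : finrank F E = p := by
    rw [FixedPoints.finrank_eq_card, ← Nat.card_eq_fintype_card, Nat.card_zpowers, hord]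
  have hFfix : ∀ f : F, σ (f : E) = f := fun f => f.2 ⟨σ, Subgroup.mem_zpowers σ⟩
  have hli : LinearIndependent F (fun i : Fin p => π ^ (i : ℕ)) := by
    rw [Fintype.linearIndependent_iff]
    intro g hg
    by_contra hcon
    push Not at hcon
    obtain ⟨i1, hi1⟩ := hcon
    have hπ0 : π ≠ 0 := by rintro rfl; simp at hπ
    have hg' : ∑ i : Fin p, (g i : E) * π ^ (i : ℕ) = 0 := hg
    obtain ⟨i0, -, hne, -, hv0⟩ := dominant v Finset.univ
      (fun i : Fin p => (g i : E) * π ^ (i : ℕ))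
      ⟨i1, Finset.mem_univ _, mul_ne_zero (by simpa using hi1) (pow_ne_zero _ hπ0)⟩ (by
        intro i _ j _ hzi hij
        exact ram_dist v he hπ hram (hFfix (g i)) (hFfix (g j)) i.2 j.2
          (fun h => hij (Fin.ext h)) hzi)
    rw [hg', v.map_zero] at hv0
    exact hne (v.top_iff.1 hv0.symm)
  have hsp := hli.span_eq_top_of_card_eq_finrank' (by rw [hFr]; simp)
  have hx : x ∈ Submodule.span F (Set.range (fun i : Fin p => π ^ (i : ℕ))) := by
    rw [hsp]; trivial
  obtain ⟨c, hc⟩ := (Submodule.mem_span_range_iff_exists_fun F).1 hx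
  refine ⟨fun i => if h : i < p then (c ⟨i, h⟩ : E) else 0, ?_, ?_⟩
  · intro i
    by_cases h : i < p
    · simp only [h, dif_pos]; exact hFfix _
    · simp [h]
  · rw [Finset.sum_range, ← hc]
    refine Finset.sum_congr rfl fun i _ => ?_
    simp only [i.2, dif_pos]
    rfl

end DegP
end HPV

namespace HPV
section DegP2
variable {p : ℕ} [hp : Fact p.Prime] {E : Type*} [Field E] [CharP E p]

lemma ram_eps (v : AddValuation E (WithTop ℤ)) {σ : E ≃+* E} (hσ : σ ^ p = 1) (hσ1 : σ ≠ 1)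
    (hv : ∀ x, v (σ x) = v x)
    {e : ℤ} (he : 0 < e) {π : E} (hπ : v π = (e : WithTop ℤ))
    (hram : ∀ f, σ f = f → f ≠ 0 → ∃ j : ℤ, v f = ((e * (p * j) : ℤ) : WithTop ℤ)) :
    ∃ (ε : E) (s : ℤ), 0 < s ∧ v ε = (s : WithTop ℤ) ∧ σ π = π * (1 + ε) := by
  have hπ0 : π ≠ 0 := by rintro rfl; simp at hπ
  have hvi := iter_val v hv
  set u := σ π / π with hu
  have hσπ0 : σ π ≠ 0 := by simpa using hπ0
  have hu0 : u ≠ 0 := div_ne_zero hσπ0 hπ0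
  have hσπu : σ π = π * u := by rw [hu]; field_simp
  have hvu : v u = 0 := by
    have h1 : v (σ π) = v π + v u := by rw [hσπu, v.map_mul]
    rw [hv, hπ] at h1
    obtain ⟨r, hr⟩ := val_exists v hu0
    rw [hr] at h1
    have : e = e + r := by exact_mod_cast h1
    have : r = 0 := by omega
    rw [hr, this]; rfl
  obtain ⟨k, hk, hsum⟩ := ram_basis v hσ hσ1 he hπ hram u
  have h1 : 0 < v (u - k 0) := by
    have hne : ∃ i ∈ Finset.range p, k i * π ^ i ≠ 0 := by
      by_contra hcon
      push Not at hcon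
      exact hu0 (hsum.trans (Finset.sum_eq_zero hcon))
    obtain ⟨i0, hi0, hz, hlt, hvs⟩ := dominant v (Finset.range p) (fun i => k i * π ^ i) hne
      (fun i hi j hj hzi hij => ram_dist v he hπ hram (hk i) (hk j) (Finset.mem_range.1 hi)
        (Finset.mem_range.1 hj) hij hzi)
    rw [← hsum, hvu] at hvs
    have hi00 : i0 = 0 := by
      obtain ⟨a, ha⟩ := hram _ (hk i0) (left_ne_zero_of_mul hz)
      rw [val_mul_eq v ha (val_pow_eq v hπ _)] at hvs
      have h2 : 0 = e * (p * a) + i0 * e := by exact_mod_cast hvs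
      have h3 : (p * a + i0 : ℤ) = 0 := by
        apply mul_left_cancel₀ he.ne'
        linarith
      have h4 : (p : ℤ) ∣ i0 := ⟨-a, by linarith⟩
      have h5 : p ∣ i0 := by exact_mod_cast h4
      exact Nat.eq_zero_of_dvd_of_lt h5 (Finset.mem_range.1 hi0)
    subst hi00
    have e1 : u - k 0 = ∑ i ∈ (Finset.range p).erase 0, k i * π ^ i := by
      rw [hsum, ← Finset.add_sum_erase _ _ hi0]; simp
    rw [e1]
    refine v.map_lt_sum (by simp) fun i hi => ?_
    have := hlt i (Finset.mem_of_mem_erase hi) (Finset.ne_of_mem_erase hi)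
    rwa [← hvs] at this
  have hk0 : 0 ≤ v (k 0) := by
    have e1 : k 0 = u - (u - k 0) := by ring
    rw [e1]
    exact v.map_le_sub hvu.ge h1.le
  have hnorm : ∏ i ∈ Finset.range p, (σ ^ i : E ≃+* E) u = 1 := by
    have h2 := norm_fixed hσ π
    rw [hu]
    simp only [map_div₀]
    rw [Finset.prod_div_distrib]
    have h3 : ∏ i ∈ Finset.range p, (σ ^ i : E ≃+* E) (σ π)
        = ∏ i ∈ Finset.range p, (σ ^ i : E ≃+* E) π := by
      conv_rhs => rw [← h2]
      rw [map_prod]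
      refine Finset.prod_congr rfl fun i _ => ?_
      have : σ * σ ^ i = σ ^ i * σ := (pow_succ' σ i).symm.trans (pow_succ σ i)
      exact (congrArg (fun τ : E ≃+* E => τ π) this).symm
    rw [h3, div_self]
    refine Finset.prod_ne_zero_iff.2 fun i _ => ?_
    exact (map_ne_zero_iff _ (σ ^ i : E ≃+* E).injective).2 hπ0
  have h2 := prod_congr_mod v (fun i => (σ ^ i : E ≃+* E) u) (fun _ => k 0) p
    (fun i => by rw [hvi]; exact hvu.ge) (fun _ => hk0) (fun i => by
      have : (σ ^ i : E ≃+* E) u - k 0 = (σ ^ i : E ≃+* E) (u - k 0) := by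
        rw [map_sub, iter_fix (hk 0)]
      rw [this, hvi]; exact h1)
  rw [hnorm, Finset.prod_const, Finset.card_range, v.map_sub_swap] at h2
  have h3 : k 0 ^ p - 1 = (k 0 - 1) ^ p := by rw [sub_pow_char, one_pow]
  rw [h3] at h2
  have h4 := pos_pow v h2
  have h5 : 0 < v (u - 1) := by
    have : u - 1 = (u - k 0) + (k 0 - 1) := by ring
    rw [this]; exact v.map_lt_add h1 h4
  have h6 : u - 1 ≠ 0 := by
    intro h
    have hu1 : u = 1 := by linear_combination h
    rw [hu1, mul_one] at hσπu
    obtain ⟨j, hj⟩ := hram π hσπu hπ0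
    rw [hπ] at hj
    have h7 : e = e * (p * j) := by exact_mod_cast hj
    have h8 : (p : ℤ) * j = 1 := by
      apply mul_left_cancel₀ he.ne'
      linarith
    have h9 : (p : ℤ) ∣ 1 := ⟨j, h8.symm⟩
    have : p ∣ 1 := by exact_mod_cast h9
    exact hp.out.one_lt.ne' (Nat.dvd_one.1 this)
  obtain ⟨s, hs⟩ := val_exists v h6
  refine ⟨u - 1, s, ?_, hs, by rw [hσπu]; ring⟩
  rw [hs] at h5
  exact_mod_cast h5

lemma ram_hB (v : AddValuation E (WithTop ℤ)) {σ : E ≃+* E} (hσ : σ ^ p = 1) (hσ1 : σ ≠ 1)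
    (hv : ∀ x, v (σ x) = v x)
    {e : ℤ} (he : 0 < e) {π : E} (hπ : v π = (e : WithTop ℤ))
    (hram : ∀ f, σ f = f → f ≠ 0 → ∃ j : ℤ, v f = ((e * (p * j) : ℤ) : WithTop ℤ)) :
    ∃ s : ℤ, 0 < s ∧ ∀ x : E, ∃ f : E, σ f = f ∧ (x = f ∨ ∃ j : ℤ, ¬ (p : ℤ) ∣ j ∧
      v (x - f) = ((e * j : ℤ) : WithTop ℤ) ∧
      v (σ (x - f) - (x - f)) = ((e * j + s : ℤ) : WithTop ℤ)) := by
  obtain ⟨ε, s, hs, hε, hσπ⟩ := ram_eps v hσ hσ1 hv he hπ hram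
  refine ⟨s, hs, fun x => ?_⟩
  obtain ⟨k, hk, hsum⟩ := ram_basis v hσ hσ1 he hπ hram x
  refine ⟨k 0, hk 0, ?_⟩
  set T := (Finset.range p).erase 0 with hT
  have hxk : x - k 0 = ∑ i ∈ T, k i * π ^ i := by
    rw [hsum, hT, ← Finset.add_sum_erase _ _ (Finset.mem_range.2 hp.out.pos)]; simp
  by_cases hne : ∃ i ∈ T, k i * π ^ i ≠ 0
  · right
    have hTp : ∀ i ∈ T, i < p := fun i hi => Finset.mem_range.1 (Finset.mem_of_mem_erase hi)
    have hT0 : ∀ i ∈ T, i ≠ 0 := fun i hi => Finset.ne_of_mem_erase hi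
    obtain ⟨i0, hi0, hz, hlt, hvs⟩ := dominant v T (fun i => k i * π ^ i) hne
      (fun i hi j hj hzi hij => ram_dist v he hπ hram (hk i) (hk j) (hTp i hi)
        (hTp j hj) hij hzi)
    obtain ⟨a, ha⟩ := hram _ (hk i0) (left_ne_zero_of_mul hz)
    have hz0 : v (k i0 * π ^ i0) = ((e * (p * a + i0) : ℤ) : WithTop ℤ) := by
      rw [val_mul_eq v ha (val_pow_eq v hπ _)]; congr 1; ring
    refine ⟨p * a + i0, ?_, ?_, ?_⟩
    · intro hd
      have h1 : (p : ℤ) ∣ i0 := (dvd_add_right (dvd_mul_right _ _)).1 hd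
      have h2 : p ∣ i0 := by exact_mod_cast h1
      exact hT0 i0 hi0 (Nat.eq_zero_of_dvd_of_lt h2 (hTp i0 hi0))
    · rw [hxk, hvs, hz0]
    · have hd : σ (x - k 0) - (x - k 0) = ∑ i ∈ T, k i * (σ (π ^ i) - π ^ i) := by
        rw [hxk, map_sum, ← Finset.sum_sub_distrib]
        refine Finset.sum_congr rfl fun i _ => ?_
        rw [_root_.map_mul, hk]; ring
      have hterm : ∀ i ∈ T, v (k i * (σ (π ^ i) - π ^ i)) = v (k i * π ^ i) + (s : WithTop ℤ) := by
        intro i hi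
        rw [v.map_mul, val_pow_sub v hs hπ hε hσπ (hT0 i hi) (hTp i hi), v.map_mul,
          val_pow_eq v hπ i, add_assoc, ← WithTop.coe_add]
        congr 3; ring
      have h0 := hterm i0 hi0
      rw [hz0, ← WithTop.coe_add] at h0
      rw [hd, ← Finset.add_sum_erase T _ hi0, v.map_add_eq_of_lt_left, h0]
      rw [h0]
      refine v.map_lt_sum WithTop.coe_ne_top fun i hi => ?_
      rw [hterm i (Finset.mem_of_mem_erase hi), WithTop.coe_add]
      have := hlt i (Finset.mem_of_mem_erase hi) (Finset.ne_of_mem_erase hi)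
      rw [hz0] at this
      exact (WithTop.add_lt_add_iff_right WithTop.coe_ne_top).2 this
  · left
    push Not at hne
    have := Finset.sum_eq_zero hne
    rw [← hxk] at this
    exact sub_eq_zero.1 this

theorem degP (v : AddValuation E (WithTop ℤ)) {σ : E ≃+* E} (hσ : σ ^ p = 1)
    (hv : ∀ x, v (σ x) = v x) {t : E} (ht : 0 < v t) (ht0 : t ≠ 0)
    (hsep : ∀ x, 0 ≤ v x → (∃ f, σ f = f ∧ 0 < v (x ^ p - f)) → ∃ g, σ g = g ∧ 0 < v (x - g))
    (n : ℕ) : ∃ m, n ≤ m ∧ ∀ b : WittVector p E,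
      WittVector.map (σ : E →+* E) b - b ∈ IntW p (vInt v) m →
      ∃ b', WittVector.map (σ : E →+* E) b' = b' ∧ b - b' ∈ IntW p (vInt v) n := by
  by_cases hσ1 : σ = 1
  · refine ⟨n, le_rfl, fun b _ => ⟨b, ?_, by rw [sub_self]; exact Subring.zero_mem _⟩⟩
    ext k
    rw [WittVector.map_coeff, hσ1]; rfl
  by_cases hA : ∃ y, 0 ≤ v y ∧ v (∑ i ∈ Finset.range p, (σ ^ i : E ≃+* E) y) = 0
  · obtain ⟨y, hy, hT⟩ := hA
    exact ⟨n, le_rfl, fun b hb => caseA v hσ hv hy hT n b hb⟩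
  push Not at hA
  obtain ⟨e, π, he, hπ, hval⟩ := exists_unif v ht ht0
  have hπ0 : π ≠ 0 := by rintro rfl; simp at hπ
  have hvi := iter_val v hv
  by_cases hram : ∀ f, σ f = f → f ≠ 0 → ∃ j : ℤ, v f = ((e * (p * j) : ℤ) : WithTop ℤ)
  · obtain ⟨s, hs, hB⟩ := ram_hB v hσ hσ1 hv he hπ hram
    exact ram_step v (σ : E →+* E) hv he hs hB n
  · exfalso
    push Not at hram
    obtain ⟨f, hf, hf0, hfj⟩ := hram
    obtain ⟨j, hj⟩ := hval f hf0
    have hpj : ¬ (p : ℤ) ∣ j := by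
      rintro ⟨c, rfl⟩
      exact hfj c hj
    have hcop : IsCoprime j (p : ℤ) := by
      have hpp : Prime (p : ℤ) := Nat.prime_iff_prime_int.1 hp.out
      exact ((hpp.irreducible.coprime_iff_not_dvd).2 hpj).symm
    obtain ⟨α, β, hαβ⟩ := hcop
    set N := ∏ i ∈ Finset.range p, (σ ^ i : E ≃+* E) π with hN
    have hNf : σ N = N := norm_fixed hσ π
    have hNv : v N = ((p * e : ℤ) : WithTop ℤ) := by
      have : ∀ n : ℕ, v (∏ i ∈ Finset.range n, (σ ^ i : E ≃+* E) π) = ((n * e : ℤ) : WithTop ℤ) := by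
        intro n
        induction n with
        | zero => simp
        | succ n ih =>
          rw [Finset.prod_range_succ, val_mul_eq v ih ((hvi n π).trans hπ)]
          congr 1; push_cast; ring
      exact this p
    have h1 : v (f ^ α * N ^ β) = (e : WithTop ℤ) := by
      rw [val_mul_eq v (val_zpow v hj α) (val_zpow v hNv β)]
      congr 1
      linear_combination e * hαβ
    have h2 : σ (f ^ α * N ^ β) = f ^ α * N ^ β := by
      rw [_root_.map_mul, fix_zpow hf, fix_zpow hNf]
    have h3 := unram_trivial v hσ hv hsep hA he hval h2 h1
    exact hσ1 (RingEquiv.ext h3)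

end DegP2
end HPV

namespace HPV
section Grp
variable {p : ℕ} [hp : Fact p.Prime] {K L : Type*} [Field K] [Field L] [Algebra K L]

/-- The approximation property for a subgroup. -/
def QProp (p : ℕ) [hp : Fact p.Prime] (v : AddValuation L (WithTop ℤ))
    (H : Subgroup (L ≃ₐ[K] L)) : Prop :=
  ∀ n, ∃ m, n ≤ m ∧ ∀ b : WittVector p L,
    (∀ h ∈ H, WittVector.map ((h : L ≃ₐ[K] L) : L →+* L) b - b ∈ IntW p (vInt v) m) →
    ∃ b', (∀ h ∈ H, WittVector.map ((h : L ≃ₐ[K] L) : L →+* L) b' = b') ∧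
      b - b' ∈ IntW p (vInt v) n

/-- The separability property of the residue fields. -/
def SepProp (K : Type*) [Field K] [Algebra K L] (p : ℕ) (v : AddValuation L (WithTop ℤ)) : Prop :=
  ∀ (H : Subgroup (L ≃ₐ[K] L)) (x : L), 0 ≤ v x →
    (∃ f, (∀ h ∈ H, h f = f) ∧ 0 < v (x ^ p - f)) → ∃ g, (∀ h ∈ H, h g = g) ∧ 0 < v (x - g)

lemma Q_step [CharP K p] (v : AddValuation L (WithTop ℤ)) (hGal : ∀ (σ : L ≃ₐ[K] L) x, v (σ x) = v x)
    {t : K} (ht : 0 < v (algebraMap K L t)) (ht0 : t ≠ 0) (hsep : SepProp K p v)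
    (N H : Subgroup (L ≃ₐ[K] L)) (h : L ≃ₐ[K] L) (hN : QProp p v N) (hNH : N ≤ H) (hh : h ∈ H)
    (hnorm : ∀ n ∈ N, h⁻¹ * n * h ∈ N) (hnorm' : ∀ n ∈ N, h * n * h⁻¹ ∈ N) (hpow : h ^ p ∈ N)
    (hgen : ∀ x : L, (∀ n ∈ N, n x = x) → h x = x → ∀ g ∈ H, g x = x) : QProp p v H := by
  let E := IntermediateField.fixedField N
  have hE : ∀ x : L, x ∈ E ↔ ∀ n ∈ N, n x = x := by
    intro x
    constructor
    · intro hx n hn; exact hx ⟨n, hn⟩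
    · intro hx n; exact hx n n.2
  let ι : E →+* L := algebraMap E L
  have hEchar : CharP E p := charP_of_injective_algebraMap (algebraMap K E).injective p
  have h1 : ∀ x ∈ E, h x ∈ E := by
    intro x hx
    rw [hE] at hx ⊢
    intro n hn
    have := congrArg h (hx _ (hnorm n hn))
    simpa [AlgEquiv.mul_apply] using this
  have h2 : ∀ x ∈ E, h⁻¹ x ∈ E := by
    intro x hx
    rw [hE] at hx ⊢
    intro n hn
    have := congrArg (⇑h⁻¹) (hx _ (hnorm' n hn))
    have e : h⁻¹ ((h * n * h⁻¹) x) = n (h⁻¹ x) := by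
      rw [← AlgEquiv.mul_apply, ← AlgEquiv.mul_apply]; congr 1; group
    rw [← e, this]
  let σ : E ≃+* E :=
    { toFun := fun x => ⟨h x, h1 x x.2⟩
      invFun := fun x => ⟨h⁻¹ x, h2 x x.2⟩
      left_inv := fun x => Subtype.ext (h.symm_apply_apply (x : L))
      right_inv := fun x => Subtype.ext (h.apply_symm_apply (x : L))
      map_mul' := fun x y => Subtype.ext (_root_.map_mul h (x : L) (y : L))
      map_add' := fun x y => Subtype.ext (map_add h (x : L) (y : L)) }
  have hσ : ∀ x : E, ι (σ x) = h (ι x) := fun x => rfl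
  have hσi : ∀ (i : ℕ) (x : E), ι ((σ ^ i : E ≃+* E) x) = (h ^ i : L ≃ₐ[K] L) (ι x) := by
    intro i
    induction i with
    | zero => intro x; rfl
    | succ i ih => intro x; rw [pow_succ, pow_succ]; exact ih (σ x)
  have hσp : σ ^ p = 1 := by
    apply RingEquiv.ext
    intro x
    apply Subtype.ext
    have := hσi p x
    exact this.trans ((hE x).1 x.2 _ hpow)
  let vE : AddValuation E (WithTop ℤ) := v.comap ι
  have hvE : ∀ x, vE x = v (ι x) := fun x => rfl
  have hfixH : ∀ f : E, σ f = f → ∀ g ∈ H, g (ι f) = ι f := by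
    intro f hf
    exact hgen _ ((hE f).1 f.2) (by rw [← hσ, hf])
  have hfixE : ∀ f : L, (∀ g ∈ H, g f = f) → ∃ f' : E, ι f' = f ∧ σ f' = f' := by
    intro f hf
    have hfE : f ∈ E := (hE f).2 fun n hn => hf n (hNH hn)
    exact ⟨⟨f, hfE⟩, rfl, Subtype.ext (hf h hh)⟩
  have hdeg := degP (p := p) vE hσp (fun x => hGal h (ι x)) (t := algebraMap K E t) ht
    (by simpa using ht0) (by
      rintro x hx ⟨f, hf, hxf⟩
      obtain ⟨g, hg, hxg⟩ := hsep H (ι x) hx ⟨ι f, hfixH f hf, by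
        rw [hvE, map_sub, map_pow] at hxf; exact hxf⟩
      obtain ⟨g', rfl, hg'⟩ := hfixE g hg
      exact ⟨g', hg', by rw [hvE, map_sub]; exact hxg⟩)
  intro n
  obtain ⟨m1, hm1, hD⟩ := hdeg n
  obtain ⟨m2, hm2, hQ⟩ := hN m1
  refine ⟨m2, hm1.trans hm2, fun b hb => ?_⟩
  obtain ⟨b1, hb1, hbb1⟩ := hQ b fun g hg => hb g (hNH hg)
  have hO : ∀ g : L ≃ₐ[K] L, ∀ x ∈ vInt v, (g : L →+* L) x ∈ vInt v := by
    intro g x hx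
    have : 0 ≤ v (g x) := by rw [hGal]; exact hx
    exact this
  have hb1E : ∀ k, b1.coeff k ∈ E := by
    intro k
    rw [hE]
    intro g hg
    have := congrArg (fun w => WittVector.coeff w k) (hb1 g hg)
    simpa [WittVector.map_coeff] using this
  let B1 : WittVector p E := WittVector.mk p fun k => ⟨b1.coeff k, hb1E k⟩
  have hB1 : WittVector.map ι B1 = b1 := by
    ext k; rw [WittVector.map_coeff]; rfl
  have hcomm : ∀ B : WittVector p E, WittVector.map ι (WittVector.map (σ : E →+* E) B)
      = WittVector.map (h : L →+* L) (WittVector.map ι B) := by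
    intro B; ext k; simp only [WittVector.map_coeff]; rfl
  have hint : ∀ (B : WittVector p E) m, B ∈ IntW p (vInt vE) m ↔
      WittVector.map ι B ∈ IntW p (vInt v) m := by
    intro B m
    simp only [mem_IntW, WittVector.map_coeff, mem_vInt, hvE]
  have hb1h : WittVector.map (h : L →+* L) b1 - b1 ∈ IntW p (vInt v) m1 := by
    have e : WittVector.map (h : L →+* L) b1 - b1 = (WittVector.map (h : L →+* L) b - b)
        - WittVector.map (h : L →+* L) (b - b1) + (b - b1) := by
      rw [map_sub]; ring
    rw [e]
    exact Subring.add_mem _ (Subring.sub_mem _ (IntW_mono _ hm2 (hb h hh))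
      (map_mem_IntW _ _ (hO h) hbb1)) hbb1
  obtain ⟨B', hB', hBB'⟩ := hD B1 ((hint _ _).2 (by rw [map_sub, hcomm, hB1]; exact hb1h))
  refine ⟨WittVector.map ι B', ?_, ?_⟩
  · intro g hg
    ext k
    simp only [WittVector.map_coeff]
    refine hfixH (B'.coeff k) ?_ g hg
    have := congrArg (fun w => WittVector.coeff w k) hB'
    simpa [WittVector.map_coeff] using this
  · have := (hint _ _).1 hBB'
    rw [map_sub, hB1] at this
    have h3 := Subring.add_mem _ (IntW_mono _ hm1 hbb1) this
    rwa [sub_add_sub_cancel] at h3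

lemma Q_pgroup [CharP K p] [FiniteDimensional K L] (v : AddValuation L (WithTop ℤ))
    (hGal : ∀ (σ : L ≃ₐ[K] L) x, v (σ x) = v x)
    {t : K} (ht : 0 < v (algebraMap K L t)) (ht0 : t ≠ 0) (hsep : SepProp K p v) (k : ℕ) :
    ∀ H : Subgroup (L ≃ₐ[K] L), Nat.card H = p ^ k → QProp p v H := by
  induction k with
  | zero =>
    intro H hH n
    rw [pow_zero, Subgroup.card_eq_one] at hH
    refine ⟨n, le_rfl, fun b _ => ⟨b, ?_, by rw [sub_self]; exact Subring.zero_mem _⟩⟩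
    intro h hh
    rw [hH, Subgroup.mem_bot] at hh
    rw [hh]
    ext k; rw [WittVector.map_coeff]; rfl
  | succ k ih =>
    intro H hH
    obtain ⟨N0, hN0⟩ := Sylow.exists_subgroup_card_pow_prime (G := H) p (n := k)
      (by rw [hH]; exact pow_dvd_pow p (Nat.le_succ k))
    have hidx : N0.index = p := by
      have := N0.card_mul_index
      rw [hN0, hH, pow_succ] at this
      exact Nat.eq_of_mul_eq_mul_left (pow_pos hp.out.pos k) this
    have hnormal : N0.Normal := by
      apply Subgroup.normal_of_index_eq_minFac_card
      rw [hidx, hH, hp.out.pow_minFac (Nat.succ_ne_zero k)]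
    obtain ⟨h, hh⟩ : ∃ h : H, h ∉ N0 := by
      by_contra hcon
      push Not at hcon
      have : N0 = ⊤ := (Subgroup.eq_top_iff' N0).2 hcon
      rw [this, Subgroup.index_top] at hidx
      exact hp.out.one_lt.ne hidx
    have hmem : ∀ g : H, (g : L ≃ₐ[K] L) ∈ N0.map H.subtype ↔ g ∈ N0 := by
      intro g
      exact Subgroup.mem_map_iff_mem H.subtype_injective
    have hmem' : ∀ n ∈ N0.map H.subtype, ∃ g : H, g ∈ N0 ∧ (g : L ≃ₐ[K] L) = n := by
      rintro n ⟨g, hg, rfl⟩; exact ⟨g, hg, rfl⟩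
    refine Q_step v hGal ht ht0 hsep (N0.map H.subtype) H h (ih _ ?_) ?_ h.2 ?_ ?_ ?_ ?_
    · rw [← hN0]
      exact Nat.card_congr (N0.equivMapOfInjective _ H.subtype_injective).toEquiv.symm
    · exact Subgroup.map_subtype_le N0
    · intro n hn
      obtain ⟨g, hg, rfl⟩ := hmem' n hn
      have := hnormal.conj_mem g hg h⁻¹
      rw [inv_inv] at this
      exact (hmem (h⁻¹ * g * h)).2 this
    · intro n hn
      obtain ⟨g, hg, rfl⟩ := hmem' n hn
      exact (hmem (h * g * h⁻¹)).2 (hnormal.conj_mem g hg h)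
    · refine (hmem (h ^ p)).2 ?_
      have := N0.pow_index_mem h
      rwa [hidx] at this
    · intro x hx hhx g hg
      let M : Subgroup H := MulAction.stabilizer H x
      have hM : ∀ g : H, g ∈ M ↔ (g : L ≃ₐ[K] L) x = x := fun g => Iff.rfl
      have hNM : N0 ≤ M := fun g hg => (hM g).2 (hx _ ((hmem g).2 hg))
      have hMt : M = ⊤ := by
        have hd := Subgroup.index_dvd_of_le hNM
        rw [hidx] at hd
        rcases (Nat.dvd_prime hp.out).1 hd with h1 | h1
        · exact Subgroup.index_eq_one.1 h1
        · exfalso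
          have h2 := Subgroup.relIndex_mul_index hNM
          rw [hidx, h1] at h2
          have h3 : N0.relIndex M = 1 := by
            have := hp.out.pos
            exact Nat.eq_of_mul_eq_mul_right this (by rw [h2, one_mul])
          exact hh (Subgroup.relIndex_eq_one.1 h3 ((hM h).2 hhx))
      have : (⟨g, hg⟩ : H) ∈ M := by rw [hMt]; trivial
      exact this

lemma Q_top [CharP K p] [FiniteDimensional K L] (v : AddValuation L (WithTop ℤ))
    (hGal : ∀ (σ : L ≃ₐ[K] L) x, v (σ x) = v x)
    {t : K} (ht : 0 < v (algebraMap K L t)) (ht0 : t ≠ 0) (hsep : SepProp K p v) :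
    QProp p v (⊤ : Subgroup (L ≃ₐ[K] L)) := by
  have hLchar : CharP L p := charP_of_injective_algebraMap (algebraMap K L).injective p
  obtain ⟨P⟩ : Nonempty (Sylow p (L ≃ₐ[K] L)) := inferInstance
  obtain ⟨k, hk⟩ := IsPGroup.iff_card.1 P.isPGroup'
  have hQ := Q_pgroup v hGal ht ht0 hsep k (P : Subgroup (L ≃ₐ[K] L)) hk
  intro n
  obtain ⟨m, hm, hQ⟩ := hQ n
  refine ⟨m, hm, fun b hb => ?_⟩
  obtain ⟨b', hb', hbb'⟩ := hQ b fun h _ => hb h trivial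
  have hO : ∀ g : L ≃ₐ[K] L, ∀ x ∈ vInt v, (g : L →+* L) x ∈ vInt v := by
    intro g x hx
    have : 0 ≤ v (g x) := by rw [hGal]; exact hx
    exact this
  have hb'g : ∀ g : L ≃ₐ[K] L, WittVector.map (g : L →+* L) b' - b' ∈ IntW p (vInt v) n := by
    intro g
    have e : WittVector.map (g : L →+* L) b' - b' = (WittVector.map (g : L →+* L) b - b)
        - WittVector.map (g : L →+* L) (b - b') + (b - b') := by
      rw [map_sub]; ring
    rw [e]
    exact Subring.add_mem _ (Subring.sub_mem _ (IntW_mono _ hm (hb g trivial))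
      (map_mem_IntW _ _ (hO g) hbb')) hbb'
  have hmul : ∀ (g h : L ≃ₐ[K] L) (z : WittVector p L),
      WittVector.map ((g * h : L ≃ₐ[K] L) : L →+* L) z
        = WittVector.map (g : L →+* L) (WittVector.map (h : L →+* L) z) := by
    intro g h z; ext k; simp only [WittVector.map_coeff]; rfl
  let X := (L ≃ₐ[K] L) ⧸ (P : Subgroup (L ≃ₐ[K] L))
  have : Fintype X := Fintype.ofFinite X
  let F : X → WittVector p L := fun q => WittVector.map ((q.out : L ≃ₐ[K] L) : L →+* L) b'
  have hF : ∀ g : L ≃ₐ[K] L, F (QuotientGroup.mk g) = WittVector.map (g : L →+* L) b' := by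
    intro g
    obtain ⟨c, hc⟩ := QuotientGroup.mk_out_eq_mul (P : Subgroup (L ≃ₐ[K] L)) g
    simp only [F]
    rw [hc, hmul, hb' c c.2]
  have hFg : ∀ (g : L ≃ₐ[K] L) (q : X), WittVector.map (g : L →+* L) (F q) = F (g • q) := by
    intro g q
    induction q using QuotientGroup.induction_on with
    | H h =>
      rw [hF, ← hmul, ← hF]; rfl
  have hsumfix : ∀ g : L ≃ₐ[K] L, WittVector.map (g : L →+* L) (∑ q, F q) = ∑ q, F q := by
    intro g
    rw [map_sum]
    simp only [hFg]
    exact Fintype.sum_equiv (MulAction.toPerm g) _ _ (fun q => rfl)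
  have hcard : Fintype.card X = (P : Subgroup (L ≃ₐ[K] L)).index := by
    rw [← Nat.card_eq_fintype_card]; rfl
  have hcop : IsCoprime ((Fintype.card X : ℕ) : ℤ) ((p : ℤ) ^ n) := by
    apply IsCoprime.pow_right
    rw [Nat.isCoprime_iff_coprime]
    refine ((Nat.Prime.coprime_iff_not_dvd hp.out).2 ?_).symm
    rw [hcard]
    exact Sylow.not_dvd_index P
  obtain ⟨α, β, hαβ⟩ := hcop
  refine ⟨(α : WittVector p L) * ∑ q, F q, ?_, ?_⟩
  · intro g _
    rw [_root_.map_mul, hsumfix, map_intCast]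
  · have h1 : ∑ q, (F q - b') = ∑ q, F q - (Fintype.card X : ℕ) * b' := by
      rw [Finset.sum_sub_distrib]
      simp
    have hαβ' : (α : WittVector p L) * (Fintype.card X : ℕ) + β * (p : WittVector p L) ^ n = 1 := by
      exact_mod_cast congrArg (Int.cast : ℤ → WittVector p L) hαβ
    have e : b - (α : WittVector p L) * ∑ q, F q = (b - b') - α * ∑ q, (F q - b')
        + β * (b' * (p : WittVector p L) ^ n) := by
      rw [h1]
      linear_combination (-b') * hαβ'
    rw [e]
    refine Subring.add_mem _ (Subring.sub_mem _ hbb' (Subring.mul_mem _ (intCast_mem _ _)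
      (Subring.sum_mem _ fun q _ => hb'g _))) (Subring.mul_mem _ (intCast_mem _ _) ?_)
    intro k hk
    rw [WittVector.mul_pow_charP_coeff_zero _ hk]
    exact Subring.zero_mem _

end Grp
end HPV

namespace HPV

lemma sep_pow (p : ℕ) [hp : Fact p.Prime] {F E : Type*} [Field F] [Field E] [Algebra F E]
    [Algebra.IsSeparable F E] [CharP F p] (S : Subring E) (hS : ∀ a, algebraMap F E a ∈ S)
    (x : E) (hx : x ^ p ∈ S) : x ∈ S := by
  haveI : ExpChar F p := ExpChar.prime hp.out
  have h := IntermediateField.adjoin_simple_eq_adjoin_pow_expChar_of_isSeparable' F E x p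
  have hx' : x ∈ IntermediateField.adjoin F {x ^ p} := by
    rw [← h]; exact IntermediateField.mem_adjoin_simple_self F x
  have hint : IsAlgebraic F (x ^ p) := Algebra.IsAlgebraic.isAlgebraic _
  have h2 := IntermediateField.adjoin_simple_toSubalgebra_of_isAlgebraic hint
  have hx2 : x ∈ (IntermediateField.adjoin F {x ^ p}).toSubalgebra := hx'
  rw [h2] at hx2
  let S' : Subalgebra F E := { S with algebraMap_mem' := hS }
  have : Algebra.adjoin F {x ^ p} ≤ S' := by
    rw [Algebra.adjoin_le_iff]
    rintro y rfl
    exact hx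
  exact this hx2

lemma sep_pow' (p : ℕ) [hp : Fact p.Prime] {A B : Type*} [CommRing A] [CommRing B]
    (hA : IsField A) (hB : IsField B) (φ : A →+* B)
    (hsep : letI := φ.toAlgebra; Algebra.IsSeparable A B) [CharP A p]
    (S : Subring B) (hS : ∀ a, φ a ∈ S)
    (x : B) (hx : x ^ p ∈ S) : x ∈ S := by
  letI : Field A := hA.toField
  letI : Field B := hB.toField
  letI := φ.toAlgebra
  haveI : Algebra.IsSeparable A B := hsep
  exact sep_pow p (F := A) S hS x hx

lemma residue_isField {K : Type*} [Field K] (w : CompleteDiscreteValuation K) :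
    IsField w.residueField := by
  refine ⟨⟨0, 1, ?_⟩, mul_comm, ?_⟩
  · intro h
    have h1 : Ideal.Quotient.mk w.maxIdeal 1 = 0 := by rw [_root_.map_one]; exact h.symm
    rw [Ideal.Quotient.eq_zero_iff_mem] at h1
    have h2 : 0 < w.v ((1 : w.integers) : K) := h1
    rw [Subring.coe_one, w.map_one] at h2
    exact lt_irrefl _ h2
  · intro a ha
    obtain ⟨x, rfl⟩ := Ideal.Quotient.mk_surjective a
    have hx : ¬ (0 < w.v (x : K)) := by
      intro h
      exact ha (Ideal.Quotient.eq_zero_iff_mem.2 h)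
    have hx0 : w.v (x : K) = 0 := le_antisymm (not_lt.1 hx) x.2
    have hne : (x : K) ≠ 0 := by
      intro h
      rw [h, w.v_zero] at hx0
      exact absurd hx0 (by simp)
    have hi : w.v ((x : K)⁻¹) = 0 := by
      have := w.map_mul (x : K) (x : K)⁻¹
      rw [mul_inv_cancel₀ hne, w.map_one, hx0, zero_add] at this
      exact this.symm
    refine ⟨Ideal.Quotient.mk _ ⟨(x : K)⁻¹, hi.ge⟩, ?_⟩
    rw [← _root_.map_mul, ← _root_.map_one (Ideal.Quotient.mk w.maxIdeal)]
    congr 1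
    exact Subtype.ext (mul_inv_cancel₀ hne)

/-- The additive valuation attached to a complete discrete valuation. -/
def vOf {L : Type*} [Field L] (w : CompleteDiscreteValuation L) : AddValuation L (WithTop ℤ) :=
  AddValuation.of w.v w.v_zero w.map_one w.min_le_add w.map_mul

lemma vOf_apply {L : Type*} [Field L] (w : CompleteDiscreteValuation L) (x : L) :
    vOf w x = w.v x := rfl

lemma residue_charP (p : ℕ) [hp : Fact p.Prime] {K : Type*} [Field K] [CharP K p]
    (w : CompleteDiscreteValuation K) : CharP w.residueField p := by
  haveI : Nontrivial w.residueField := (residue_isField w).nontrivial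
  rw [CharP.charP_iff_prime_eq_zero hp.out]
  have h : ((p : ℕ) : w.integers) = 0 := Subtype.ext (by
    rw [Subring.coe_natCast, CharP.cast_eq_zero, Subring.coe_zero])
  have := congrArg (Ideal.Quotient.mk w.maxIdeal) h
  rwa [map_natCast, map_zero] at this

lemma sepProp_of (p : ℕ) [hp : Fact p.Prime]
    {K L : Type*} [Field K] [Field L] [Algebra K L] [CharP K p]
    (wK : CompleteDiscreteValuation K) (wL : CompleteDiscreteValuation L)
    (e : ℕ) (he : 0 < e)
    (hcomp : ∀ x : K, wL.v (algebraMap K L x) = e • wK.v x)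
    (hsep : ResidueSeparable wK wL e he hcomp) : SepProp K p (vOf wL) := by
  rintro H x hx ⟨f, hf, hxf⟩
  haveI := residue_charP p wK
  let S0 : Subring wL.integers :=
    { carrier := {y | ∀ h ∈ H, h (y : L) = y}
      zero_mem' := by intro h _; simp
      one_mem' := by intro h _; simp
      add_mem' := by
        intro a b ha hb h hh
        have h1 := ha h hh
        have h2 := hb h hh
        rw [Subring.coe_add, map_add, h1, h2]
      mul_mem' := by
        intro a b ha hb h hh
        have h1 := ha h hh
        have h2 := hb h hh
        rw [Subring.coe_mul, _root_.map_mul, h1, h2]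
      neg_mem' := by
        intro a ha h hh
        have h1 := ha h hh
        rw [Subring.coe_neg, map_neg, h1] }
  have hx' : 0 ≤ wL.v x := hx
  have hxf' : 0 < wL.v (x ^ p - f) := hxf
  have hf0 : 0 ≤ wL.v f := by
    have h1 : x ^ p ∈ wL.integers := Subring.pow_mem _ hx' p
    have h2 : x ^ p - f ∈ wL.integers := hxf'.le
    have h3 := Subring.sub_mem _ h1 h2
    rw [sub_sub_cancel] at h3
    exact h3
  have key := sep_pow' p (residue_isField wK) (residue_isField wL) (residueMap wK wL e he hcomp)
    hsep (S0.map (Ideal.Quotient.mk wL.maxIdeal)) ?_ (Ideal.Quotient.mk _ ⟨x, hx'⟩) ?_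
  · obtain ⟨g, hg, hgx⟩ := key
    refine ⟨g, hg, ?_⟩
    have := Ideal.Quotient.eq.1 hgx.symm
    exact this
  · intro a
    obtain ⟨y, rfl⟩ := Ideal.Quotient.mk_surjective a
    refine ⟨integerMap wK wL e hcomp y, ?_, ?_⟩
    · intro h _
      exact h.commutes _
    · rfl
  · refine ⟨⟨f, hf0⟩, hf, ?_⟩
    rw [← map_pow]
    refine (Ideal.Quotient.eq.2 ?_).symm
    exact hxf'

/-- Additive Hilbert 90 for Witt vectors, in truncated form. -/
lemma hilbert90 (p : ℕ) [hp : Fact p.Prime]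
    {K L : Type*} [Field K] [Field L] [Algebra K L] [CharP K p]
    [IsGalois K L] [FiniteDimensional K L] (m : ℕ) (hm : 0 < m)
    (C : (L ≃ₐ[K] L) → WittVector p L)
    (hC : ∀ σ τ : L ≃ₐ[K] L, WittVector.truncate m (C (σ * τ)) =
      WittVector.truncate m (C σ + WittVector.map (σ : L →+* L) (C τ))) :
    ∃ b : WittVector p L, ∀ σ : L ≃ₐ[K] L,
      WittVector.truncate m (WittVector.map (σ : L →+* L) b - b) =
        WittVector.truncate m (C σ) := by
  haveI : CharP L p := charP_of_injective_algebraMap (algebraMap K L).injective p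
  obtain ⟨y, hy⟩ : ∃ y : L, (∑ g : (L ≃ₐ[K] L), g y) ≠ 0 := by
    obtain ⟨y, hy⟩ := Algebra.trace_surjective K L 1
    refine ⟨y, ?_⟩
    rw [← trace_eq_sum_automorphisms, hy, _root_.map_one]
    exact one_ne_zero
  have hcomp' : ∀ (σ τ : L ≃ₐ[K] L) (x : WittVector p L),
      WittVector.map (σ : L →+* L) (WittVector.map (τ : L →+* L) x) =
        WittVector.map ((σ * τ : L ≃ₐ[K] L) : L →+* L) x := by
    intro σ τ x
    ext k
    simp
  let Y : WittVector p L := WittVector.teichmuller p y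
  let T : WittVector p L := ∑ g : (L ≃ₐ[K] L), WittVector.map (g : L →+* L) Y
  have hT0 : T.coeff 0 ≠ 0 := by
    have : T.coeff 0 = ∑ g : (L ≃ₐ[K] L), g y := by
      change WittVector.constantCoeff T = _
      rw [map_sum]
      refine Finset.sum_congr rfl fun g _ => ?_
      simp [Y, WittVector.constantCoeff]
    rwa [this]
  have hTu : IsUnit T := WittVector.isUnit_of_coeff_zero_ne_zero T hT0
  obtain ⟨z, hz⟩ := hTu.exists_right_inv
  have hTfix : ∀ σ : L ≃ₐ[K] L, WittVector.map (σ : L →+* L) T = T := by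
    intro σ
    simp only [T, map_sum, hcomp']
    exact Fintype.sum_equiv (Equiv.mulLeft σ) _ _ (fun g => rfl)
  have hzfix : ∀ σ : L ≃ₐ[K] L, WittVector.map (σ : L →+* L) z = z := fun σ =>
    map_fix_unit _ hz (hTfix σ)
  let U : WittVector p L := ∑ g : (L ≃ₐ[K] L), C g * WittVector.map (g : L →+* L) Y
  refine ⟨-(z * U), fun σ => ?_⟩
  have hU : WittVector.truncate m (WittVector.map (σ : L →+* L) U) =
      WittVector.truncate m (U - C σ * T) := by
    have e1 : WittVector.map (σ : L →+* L) U = ∑ g : (L ≃ₐ[K] L),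
        WittVector.map (σ : L →+* L) (C g) *
          WittVector.map ((σ * g : L ≃ₐ[K] L) : L →+* L) Y := by
      simp only [U, map_sum, _root_.map_mul, hcomp']
    have e2 : U = ∑ g : (L ≃ₐ[K] L), C (σ * g) *
          WittVector.map ((σ * g : L ≃ₐ[K] L) : L →+* L) Y :=
      (Fintype.sum_equiv (Equiv.mulLeft σ) _ _ (fun g => rfl)).symm
    have e3 : T = ∑ g : (L ≃ₐ[K] L),
          WittVector.map ((σ * g : L ≃ₐ[K] L) : L →+* L) Y :=
      (Fintype.sum_equiv (Equiv.mulLeft σ) _ _ (fun g => rfl)).symm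
    rw [e1, e3]
    conv_rhs => rw [e2]
    rw [Finset.mul_sum, ← Finset.sum_sub_distrib, map_sum, map_sum]
    refine Finset.sum_congr rfl fun g _ => ?_
    rw [map_sub, _root_.map_mul, _root_.map_mul, _root_.map_mul, hC, map_add]
    ring
  rw [map_neg, _root_.map_mul, hzfix, map_sub, map_neg, _root_.map_mul, hU, map_sub, _root_.map_mul, map_neg, _root_.map_mul]
  have hz' : WittVector.truncate m T * WittVector.truncate m z = 1 := by
    rw [← _root_.map_mul, hz, _root_.map_one]
  linear_combination (WittVector.truncate m (C σ)) * hz'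

end HPV

/-- Let `L/K` be a finite Galois extension of complete discrete valued
fields of equal characteristic `p > 0` (with Galois group `G = L ≃ₐ[K] L`) whose induced
residue field extension is separable.  Then the pro-abelian group `{H¹(G, Wₙ(O_L))}ₙ` is
zero: for every `n` there is `m > n` such that every `1`-cocycle with values in `W_m(O_L)`
becomes a `1`-coboundary after truncation to `W_n(O_L)`. -/
theorem hesselholt_equicharacteristic_pro_vanishing
    (p : ℕ) [Fact p.Prime]
    {K L : Type*} [Field K] [Field L] [Algebra K L] [CharP K p]
    (wK : CompleteDiscreteValuation K) (wL : CompleteDiscreteValuation L)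
    [IsGalois K L] [FiniteDimensional K L]
    (e : ℕ) (he : 0 < e)
    (hcomp : ∀ x : K, wL.v (algebraMap K L x) = e • wK.v x)
    (hsep : ResidueSeparable wK wL e he hcomp)
    (hGal : ∀ (σ : L ≃ₐ[K] L) (x : L), wL.v (σ x) = wL.v x) :
    ∀ n : ℕ, ∃ m : ℕ, ∃ hm : n < m,
      ∀ c : (L ≃ₐ[K] L) → TruncatedWittVector p m wL.integers,
        (∀ σ τ : L ≃ₐ[K] L,
            c (σ * τ) = c σ + TruncatedWittVector.map (wL.galRes hGal σ) (c τ)) →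
        ∃ b : TruncatedWittVector p n wL.integers, ∀ σ : L ≃ₐ[K] L,
          TruncatedWittVector.truncate (le_of_lt hm) (c σ) =
            TruncatedWittVector.map (wL.galRes hGal σ) b - b := by
  intro n
  obtain ⟨t, ht⟩ := wK.surjective 1
  have ht0 : t ≠ 0 := by
    rintro rfl
    rw [wK.v_zero] at ht
    exact absurd ht (by simp)
  have htL : 0 < HPV.vOf wL (algebraMap K L t) := by
    rw [HPV.vOf_apply, hcomp, ht]
    have : (0 : WithTop ℤ) < e • ((1 : ℤ) : WithTop ℤ) := by
      calc (0 : WithTop ℤ) < ((1 : ℤ) : WithTop ℤ) := by exact_mod_cast one_pos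
        _ = 1 • ((1 : ℤ) : WithTop ℤ) := (one_nsmul _).symm
        _ ≤ e • ((1 : ℤ) : WithTop ℤ) := nsmul_le_nsmul_left (by exact_mod_cast zero_le_one) he
    exact this
  obtain ⟨m0, hnm, hQ⟩ := HPV.Q_top (p := p) (HPV.vOf wL) hGal htL ht0
    (HPV.sepProp_of p wK wL e he hcomp hsep) n
  refine ⟨m0 + 1, by omega, fun c hc => ?_⟩
  have hinj : ∀ k : ℕ, Function.Injective
      (TruncatedWittVector.map (p := p) (n := k) wL.integers.subtype) := by
    intro k x y hxy
    ext i
    have := congrArg (TruncatedWittVector.coeff i) hxy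
    rw [TruncatedWittVector.map_coeff, TruncatedWittVector.map_coeff] at this
    exact this
  have htr : ∀ (k : ℕ) (σ : L ≃ₐ[K] L) (x : TruncatedWittVector p k wL.integers),
      TruncatedWittVector.map wL.integers.subtype
        (TruncatedWittVector.map (wL.galRes hGal σ) x) =
      TruncatedWittVector.map ((σ : L ≃ₐ[K] L) : L →+* L)
        (TruncatedWittVector.map wL.integers.subtype x) := by
    intro k σ x
    ext i
    simp only [TruncatedWittVector.map_coeff]
    rfl
  have htm : ∀ (k : ℕ) (σ : L ≃ₐ[K] L) (x : WittVector p L),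
      WittVector.truncate k (WittVector.map (σ : L →+* L) x) =
        TruncatedWittVector.map (σ : L →+* L) (WittVector.truncate k x) := by
    intro k σ x
    ext i
    rw [WittVector.coeff_truncate, TruncatedWittVector.map_coeff, WittVector.coeff_truncate,
      WittVector.map_coeff]
  let C : (L ≃ₐ[K] L) → WittVector p L := fun σ =>
    WittVector.map wL.integers.subtype (c σ).out
  have hCc : ∀ σ, WittVector.truncate (m0 + 1) (C σ) =
      TruncatedWittVector.map wL.integers.subtype (c σ) := fun σ => rfl
  obtain ⟨b, hb⟩ := HPV.hilbert90 p (m0 + 1) (Nat.succ_pos _) C (by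
    intro σ τ
    rw [map_add, htm, hCc, hCc, hCc, hc, map_add, htr])
  have hCint : ∀ σ k, (C σ).coeff k ∈ HPV.vInt (HPV.vOf wL) := by
    intro σ k
    show (WittVector.map wL.integers.subtype (c σ).out).coeff k ∈ _
    rw [WittVector.map_coeff]
    exact ((c σ).out.coeff k).2
  obtain ⟨b', hb', hbb⟩ := hQ b (by
    intro σ _ k hk
    have := congrArg (TruncatedWittVector.coeff (⟨k, by omega⟩ : Fin (m0 + 1))) (hb σ)
    rw [WittVector.coeff_truncate, WittVector.coeff_truncate] at this
    show (WittVector.map (σ : L →+* L) b - b).coeff k ∈ HPV.vInt (HPV.vOf wL)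
    rw [this]
    exact hCint σ k)
  let a : TruncatedWittVector p n wL.integers :=
    TruncatedWittVector.mk p fun i => ⟨(b - b').coeff i, hbb i i.2⟩
  have ha : TruncatedWittVector.map wL.integers.subtype a = WittVector.truncate n (b - b') := by
    ext i
    rw [TruncatedWittVector.map_coeff, WittVector.coeff_truncate, TruncatedWittVector.coeff_mk]
    rfl
  refine ⟨a, fun σ => hinj n ?_⟩
  rw [map_sub, htr, ha, ← htm, ← map_sub]
  have h1 : WittVector.map (σ : L →+* L) (b - b') - (b - b') =
      WittVector.map (σ : L →+* L) b - b := by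
    rw [map_sub, hb' σ (Subgroup.mem_top σ)]
    ring
  rw [h1]
  have h2 := congrArg (TruncatedWittVector.truncate (show n ≤ m0 + 1 by omega)) (hb σ)
  rw [TruncatedWittVector.truncate_wittVector_truncate, hCc] at h2
  rw [h2]
  ext i
  rw [TruncatedWittVector.map_coeff, TruncatedWittVector.coeff_truncate,
    TruncatedWittVector.coeff_truncate, TruncatedWittVector.map_coeff]
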